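/- arXiv:1205.6578 — 2 statements merged into one kernel-verified Lean document; each statement's English description precedes it below -/
import Mathlib

section
/- For each Dyck path λ of order n and each linear extension σ ∈ L(P_λ), the discrepancy of DTR(λ,σ) equals the number of descents of σ: dis(DTR(λ,σ)) = des(σ). -/
open Finset

noncomputable section

/-- A Dyck path of order `n`: a word of `2n` steps (`true` = up-step `(+1,+1)`,
`false` = down-step `(+1,-1)`) from `(-n,0)` to `(n,0)` staying weakly above the x-axis. -/
structure DyckPath (n : ℕ) where
  step : Fin (2 * n) → Bool
  balanced : (Finset.univ.filter fun i => step i = true).card = n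
  nonneg : ∀ k : ℕ, k ≤ 2 * n →
    (Finset.univ.filter fun i : Fin (2 * n) => (i : ℕ) < k ∧ step i = false).card ≤
      (Finset.univ.filter fun i : Fin (2 * n) => (i : ℕ) < k ∧ step i = true).card

namespace DyckPath

/-- Height of the path above column `x` (columns run from `-n` to `n`). -/
def ht {n : ℕ} (P : DyckPath n) (x : ℤ) : ℤ :=
  ((Finset.univ.filter fun i : Fin (2 * n) => ((i : ℕ) : ℤ) < x + n ∧ P.step i = true).card : ℤ) -
    ((Finset.univ.filter fun i : Fin (2 * n) => ((i : ℕ) : ℤ) < x + n ∧ P.step i = false).card : ℤ)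

/-- Height of the path at lattice point number `k`, `0 ≤ k ≤ 2n`
(point `k` lies at column `k - n`). -/
def pt {n : ℕ} (P : DyckPath n) (k : ℕ) : ℤ := P.ht ((k : ℤ) - n)

end DyckPath

/-- `IsChord P p q`: the up-step at (0-indexed) position `p` matches the down-step at
position `q`, forming a chord of `P`. -/
def IsChord {n : ℕ} (P : DyckPath n) (p q : ℕ) : Prop :=
  p < q ∧ q < 2 * n ∧
    (∃ hp : p < 2 * n, P.step ⟨p, hp⟩ = true) ∧
    (∃ hq : q < 2 * n, P.step ⟨q, hq⟩ = false) ∧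
    P.pt (q + 1) = P.pt p ∧
    ∀ m : ℕ, p < m → m ≤ q → P.pt p < P.pt m

/-- A natural labeling of the chord poset of `P`: the chord labeled `i` has its up-step at
(0-indexed) position `l i` and matching down-step at position `r i`; distinct labels name
distinct chords; and if one chord is nested inside another it receives a larger label. -/
structure ChordLabeling {n : ℕ} (P : DyckPath n) where
  l : Fin n → ℕ
  r : Fin n → ℕ
  chord : ∀ i, IsChord P (l i) (r i)
  inj : Function.Injective l
  natural : ∀ i j : Fin n, l j < l i → r i < r j → j < i

/-- The length of the chord labeled `i`: the number of up steps of `P` between and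
including its two endpoints. -/
def chordLen {n : ℕ} {P : DyckPath n} (C : ChordLabeling P) (i : Fin n) : ℕ :=
  (Finset.univ.filter fun m : Fin (2 * n) =>
    C.l i ≤ (m : ℕ) ∧ (m : ℕ) ≤ C.r i ∧ P.step m = true).card

/-- The growth sequence `p_1, …, p_n` associated with a natural chord labeling:
`p i = #{j<i : l j < l i} + #{j<i : r j < l i}`. -/
def seqOf {n : ℕ} {P : DyckPath n} (C : ChordLabeling P) (i : Fin n) : ℕ :=
  (Finset.univ.filter fun j : Fin n => j < i ∧ C.l j < C.l i).card +
    (Finset.univ.filter fun j : Fin n => j < i ∧ C.r j < C.l i).card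

/-- `σ` is the standardization of the word `w` (with distinct letters). -/
def IsStandardization {n : ℕ} (w : Fin n → ℕ) (σ : Equiv.Perm (Fin n)) : Prop :=
  ∀ i j : Fin n, σ i < σ j ↔ w i < w j

/-- `σ ∈ 𝓛(P_λ)`: σ is `L₀ ∘ L⁻¹` for some natural labeling `L` of the chord poset,
equivalently the standardization of the word of left endpoints of a natural labeling. -/
def LinExt {n : ℕ} (P : DyckPath n) (σ : Equiv.Perm (Fin n)) : Prop :=
  ∃ C : ChordLabeling P, IsStandardization C.l σ

/-- Successor index in `Fin n` (used only under the guard `i+1 < n`). -/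
def nextIdx {n : ℕ} (i : Fin n) : Fin n := ⟨((i : ℕ) + 1) % n, Nat.mod_lt _ i.pos⟩

/-- Descent set of a word: positions `i` with `i+1 < n` and `w i > w (i+1)`. -/
def descentFinset {n : ℕ} (w : Fin n → ℕ) : Finset (Fin n) :=
  Finset.univ.filter fun i => (i : ℕ) + 1 < n ∧ w (nextIdx i) < w i

/-- Number of inversions of a word. -/
def wordInv {n : ℕ} (w : Fin n → ℕ) : ℕ :=
  (Finset.univ.filter fun p : Fin n × Fin n => p.1 < p.2 ∧ w p.2 < w p.1).card

/-- The word of values of a permutation. -/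
def permWord {n : ℕ} (σ : Equiv.Perm (Fin n)) : Fin n → ℕ := fun i => (σ i : ℕ)

/-- inv(σ). -/
def permInv {n : ℕ} (σ : Equiv.Perm (Fin n)) : ℕ := wordInv (permWord σ)

/-- des(σ). -/
def permDes {n : ℕ} (σ : Equiv.Perm (Fin n)) : ℕ := (descentFinset (permWord σ)).card

/-- `REM_i(w) = {k > i : w i > w k > w (i+1)}`, the right embraced numbers. -/
def remSet {n : ℕ} (w : Fin n → ℕ) (i : Fin n) : Finset (Fin n) :=
  Finset.univ.filter fun k => i < k ∧ w (nextIdx i) < w k ∧ w k < w i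

/-- desdif(σ) = Σ_{i ∈ DES σ} (σ i − σ (i+1)). -/
def desdif {n : ℕ} (σ : Equiv.Perm (Fin n)) : ℕ :=
  ∑ i ∈ descentFinset (permWord σ), (permWord σ i - permWord σ (nextIdx i))

/-- res(σ) = Σ_{i ∈ DES σ} #{k < i : σ i > σ k > σ (i+1)}. -/
def resStat {n : ℕ} (σ : Equiv.Perm (Fin n)) : ℕ :=
  ∑ i ∈ descentFinset (permWord σ),
    (Finset.univ.filter fun k : Fin n =>
      k < i ∧ permWord σ (nextIdx i) < permWord σ k ∧ permWord σ k < permWord σ i).card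

/-- The Mahonian statistic mad(σ) = desdif(σ) + res(σ). -/
def mad {n : ℕ} (σ : Equiv.Perm (Fin n)) : ℕ := desdif σ + resStat σ

/-- σ avoids the pattern 231. -/
def Avoids231 {n : ℕ} (σ : Equiv.Perm (Fin n)) : Prop :=
  ¬∃ i j k : Fin n, i < j ∧ j < k ∧ σ k < σ i ∧ σ i < σ j

/-- The boxes of the skew shape `lam/mu` (with `mu` weakly above `lam`), each box
recorded by its bottom corner (a lattice point `(x, z)` with `z ≡ x + n (mod 2)`). -/
def skewCells {n : ℕ} (lam mu : DyckPath n) : Finset (ℤ × ℤ) :=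
  ((Finset.Icc (-(n : ℤ)) n) ×ˢ (Finset.Icc (0 : ℤ) n)).filter fun c =>
    lam.ht c.1 ≤ c.2 ∧ c.2 + 2 ≤ mu.ht c.1 ∧ (c.2 - c.1 - n) % 2 = 0

/-- A Dyck tile, recorded by the set of bottom corners of its boxes: these form
a Dyck-path shape, i.e. a ±1-step lattice path whose two ends are lowest. -/
def IsDyckTile (t : Finset (ℤ × ℤ)) : Prop :=
  ∃ (a b : ℤ) (f : ℤ → ℤ), a ≤ b ∧
    (∀ x : ℤ, a ≤ x → x < b → f (x + 1) = f x + 1 ∨ f (x + 1) = f x - 1) ∧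
    f b = f a ∧ (∀ x : ℤ, a ≤ x → x ≤ b → f a ≤ f x) ∧
    t = (Finset.Icc a b).image fun x => (x, f x)

/-- A Dyck tiling of order `n`: a tiling of the skew shape between two Dyck paths of
order `n` by Dyck tiles. -/
structure DyckTiling (n : ℕ) where
  lower : DyckPath n
  upper : DyckPath n
  below : ∀ x : ℤ, lower.ht x ≤ upper.ht x
  tiles : Finset (Finset (ℤ × ℤ))
  isDyck : ∀ t ∈ tiles, IsDyckTile t
  disj : ∀ t ∈ tiles, ∀ u ∈ tiles, t ≠ u → Disjoint t u
  cover : tiles.biUnion id = skewCells lower upper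

namespace DyckTiling

/-- Number of boxes of the skew shape. -/
def area {n : ℕ} (T : DyckTiling n) : ℕ := (skewCells T.lower T.upper).card

/-- Number of tiles. -/
def numTiles {n : ℕ} (T : DyckTiling n) : ℕ := T.tiles.card

/-- art(T) = (area(T) + tiles(T)) / 2. -/
def art {n : ℕ} (T : DyckTiling n) : ℕ := (T.area + T.numTiles) / 2

/-- dis(T): the number of step positions where the lower path steps down while the
upper path steps up. -/
def dis {n : ℕ} (T : DyckTiling n) : ℕ :=
  (Finset.univ.filter fun i : Fin (2 * n) =>
    T.lower.step i = false ∧ T.upper.step i = true).card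

/-- Cover-inclusiveness: whenever a tile has a box strictly above a box of another tile,
its horizontal extent is contained in that of the other tile. -/
def CoverInclusive {n : ℕ} (T : DyckTiling n) : Prop :=
  ∀ t ∈ T.tiles, ∀ u ∈ T.tiles,
    (∃ p ∈ t, ∃ q ∈ u, (p : ℤ × ℤ).1 = (q : ℤ × ℤ).1 ∧ (q : ℤ × ℤ).2 < (p : ℤ × ℤ).2) →
    ∀ p ∈ t, ∃ y : ℤ, ((p : ℤ × ℤ).1, y) ∈ u

end DyckTiling

/-- Height function of the spread at column `s` of a Dyck path. -/
def spreadHt {n : ℕ} (P : DyckPath n) (s x : ℤ) : ℤ :=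
  if x < s then P.ht (x + 1) else if x = s then P.ht s + 1 else P.ht (x - 1)

/-- Spread of a tile at column `s`: points left of `s` move left, points right of `s`
move right, and a point at column `s` is duplicated upward. -/
def spreadTile (s : ℤ) (t : Finset (ℤ × ℤ)) : Finset (ℤ × ℤ) :=
  ((t.filter fun p => p.1 ≤ s).image fun p => (p.1 - 1, p.2)) ∪
    ((t.filter fun p => p.1 = s).image fun p => (p.1, p.2 + 1)) ∪
    ((t.filter fun p => s ≤ p.1).image fun p => (p.1 + 1, p.2))

/-- Spread of a set of tiles at column `s`. -/
def spreadTiles (s : ℤ) (ts : Finset (Finset (ℤ × ℤ))) : Finset (Finset (ℤ × ℤ)) :=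
  ts.image (spreadTile s)

/-- Column `c` is eligible for a tiling with upper-boundary height function `h` and
tile set `ts`: the upper boundary has an up step ending at column `c`, and its point at
column `c` is not the top corner of a one-box tile. -/
def EligibleCol (h : ℤ → ℤ) (ts : Finset (Finset (ℤ × ℤ))) (c : ℤ) : Prop :=
  h c = h (c - 1) + 1 ∧ ({(c, h c - 2)} : Finset (ℤ × ℤ)) ∉ ts

/-- `T'` is the result of the strip-grow map applied to `(T, s)`: spread `T` at `s` and
add a one-box tile on each up step of the (spread) upper boundary starting at a column
`≥ s` (i.e. strictly to the right of column `s`). -/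
def StripGrowRel {n : ℕ} (T : DyckTiling n) (s : ℤ) (T' : DyckTiling (n + 1)) : Prop :=
  (∀ x : ℤ, T'.lower.ht x = spreadHt T.lower s x) ∧
  (∀ x : ℤ, T'.upper.ht x =
    if s ≤ x ∧ spreadHt T.upper s (x + 1) = spreadHt T.upper s x + 1 then
      spreadHt T.upper s x + 2
    else spreadHt T.upper s x) ∧
  T'.tiles = spreadTiles s T.tiles ∪
    ((Finset.Icc s (n : ℤ)).filter fun x =>
        spreadHt T.upper s (x + 1) = spreadHt T.upper s x + 1).image
      (fun x => ({(x, spreadHt T.upper s x)} : Finset (ℤ × ℤ)))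

/-- `T'` is the result of the ribbon-grow map applied to `(T, s)`: spread `T` at `s`,
and if the special column `Q` of the spread tiling is strictly right of `s`, add a
ribbon of one-box tiles at all columns strictly between `s` and `Q`. -/
def RibbonGrowRel {n : ℕ} (T : DyckTiling n) (s : ℤ) (T' : DyckTiling (n + 1)) : Prop :=
  (∀ x : ℤ, T'.lower.ht x = spreadHt T.lower s x) ∧
  ∃ Q : ℤ,
    EligibleCol (spreadHt T.upper s) (spreadTiles s T.tiles) Q ∧
    (∀ c : ℤ, EligibleCol (spreadHt T.upper s) (spreadTiles s T.tiles) c → c ≤ Q) ∧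
    (∀ x : ℤ, T'.upper.ht x =
      if s < x ∧ x < Q then spreadHt T.upper s x + 2 else spreadHt T.upper s x) ∧
    T'.tiles = spreadTiles s T.tiles ∪
      (Finset.Ioo s Q).image (fun x => ({(x, spreadHt T.upper s x)} : Finset (ℤ × ℤ)))

/-- `s` is the special column of `T`: its rightmost eligible column. -/
def SpecialCol {n : ℕ} (T : DyckTiling n) (s : ℤ) : Prop :=
  EligibleCol T.upper.ht T.tiles s ∧ ∀ c : ℤ, EligibleCol T.upper.ht T.tiles c → c ≤ s

/-- In the strip-shrink map applied to `T'` with special column `s`, a one-box tile is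
removed at column `x`: `x` is right of `s` and there is a one-box tile there that is
part of an up step of the upper boundary. -/
def StripRemovedAt {n : ℕ} (T' : DyckTiling n) (s x : ℤ) : Prop :=
  s < x ∧ T'.upper.ht x = T'.upper.ht (x - 1) + 1 ∧
    ({(x, T'.upper.ht x - 2)} : Finset (ℤ × ℤ)) ∈ T'.tiles

instance {n : ℕ} (T' : DyckTiling n) (s x : ℤ) : Decidable (StripRemovedAt T' s x) := by
  unfold StripRemovedAt; infer_instance

/-- `(T, s)` is the result of the strip-shrink map applied to `T'`: `s` is the special
column of `T'`; all one-box tiles right of `s` lying on up steps of the upper boundary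
are removed; and the result is the spread of `T` at `s`. -/
def StripShrinkRel {n : ℕ} (T' : DyckTiling (n + 1)) (T : DyckTiling n) (s : ℤ) : Prop :=
  SpecialCol T' s ∧
  (∀ x : ℤ, spreadHt T.lower s x = T'.lower.ht x) ∧
  (∀ x : ℤ, spreadHt T.upper s x =
    if StripRemovedAt T' s x then T'.upper.ht x - 2 else T'.upper.ht x) ∧
  spreadTiles s T.tiles =
    T'.tiles \ (((Finset.Ioc s ((n : ℤ) + 1)).filter fun x => StripRemovedAt T' s x).image
      fun x => ({(x, T'.upper.ht x - 2)} : Finset (ℤ × ℤ)))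

/-- `(T, s)` is the result of the ribbon-shrink map applied to `T'`: `s` is the special
column of `T'`; the maximal run of topmost one-box tiles in columns `s+1, s+2, …` is
removed; and the result is the spread of `T` at `s`. -/
def RibbonShrinkRel {n : ℕ} (T' : DyckTiling (n + 1)) (T : DyckTiling n) (s : ℤ) : Prop :=
  SpecialCol T' s ∧
  ∃ r : ℤ, s < r ∧
    (∀ x : ℤ, s < x → x < r → ({(x, T'.upper.ht x - 2)} : Finset (ℤ × ℤ)) ∈ T'.tiles) ∧
    ({(r, T'.upper.ht r - 2)} : Finset (ℤ × ℤ)) ∉ T'.tiles ∧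
    (∀ x : ℤ, spreadHt T.lower s x = T'.lower.ht x) ∧
    (∀ x : ℤ, spreadHt T.upper s x =
      if s < x ∧ x < r then T'.upper.ht x - 2 else T'.upper.ht x) ∧
    spreadTiles s T.tiles =
      T'.tiles \ ((Finset.Ioo s r).image fun x => ({(x, T'.upper.ht x - 2)} : Finset (ℤ × ℤ)))

/-- `IsDTS n p T`: `T` is the Dyck tiling `DTS(p_1, …, p_n)` (indices 0-based, so the
growth column for step `i` is `p i - i`). -/
inductive IsDTS : (n : ℕ) → (Fin n → ℕ) → DyckTiling n → Prop where
  | nil (p : Fin 0 → ℕ) (T : DyckTiling 0) : IsDTS 0 p T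
  | cons (n : ℕ) (p : Fin (n + 1) → ℕ) (T : DyckTiling n) (T' : DyckTiling (n + 1)) :
      IsDTS n (fun i => p i.castSucc) T →
      StripGrowRel T ((p (Fin.last n) : ℤ) - n) T' → IsDTS (n + 1) p T'

/-- `IsDTR n p T`: `T` is the Dyck tiling `DTR(p_1, …, p_n)`. -/
inductive IsDTR : (n : ℕ) → (Fin n → ℕ) → DyckTiling n → Prop where
  | nil (p : Fin 0 → ℕ) (T : DyckTiling 0) : IsDTR 0 p T
  | cons (n : ℕ) (p : Fin (n + 1) → ℕ) (T : DyckTiling n) (T' : DyckTiling (n + 1)) :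
      IsDTR n (fun i => p i.castSucc) T →
      RibbonGrowRel T ((p (Fin.last n) : ℤ) - n) T' → IsDTR (n + 1) p T'

/-- `T = DTS(λ, σ)`. -/
def IsDTSof {n : ℕ} (lam : DyckPath n) (σ : Equiv.Perm (Fin n)) (T : DyckTiling n) : Prop :=
  ∃ C : ChordLabeling lam, IsStandardization C.l σ ∧ IsDTS n (seqOf C) T

/-- `T = DTR(λ, σ)`. -/
def IsDTRof {n : ℕ} (lam : DyckPath n) (σ : Equiv.Perm (Fin n)) (T : DyckTiling n) : Prop :=
  ∃ C : ChordLabeling lam, IsStandardization C.l σ ∧ IsDTR n (seqOf C) T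

/-- Increment `a` if it exceeds `p`. -/
def bump (p a : ℕ) : ℕ := if p < a then a + 1 else a

/-- The perfect matching `match(p_1, …, p_n)` of `{1, …, 2n}`. -/
def matchSeq : (n : ℕ) → (Fin n → ℕ) → Finset (ℕ × ℕ)
  | 0, _ => ∅
  | n + 1, p =>
    ((matchSeq n fun i => p i.castSucc).image fun q =>
      (bump (p (Fin.last n)) q.1, bump (p (Fin.last n)) q.2)) ∪
      {(p (Fin.last n) + 1, 2 * (n + 1))}

/-- The number of nestings of a matching: pairs `(a,b)`, `(c,d)` with `c < a < b < d`. -/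
def nestings (M : Finset (ℕ × ℕ)) : ℕ :=
  ((M ×ˢ M).filter fun q => q.2.1 < q.1.1 ∧ q.1.1 < q.1.2 ∧ q.1.2 < q.2.2).card

/-- `w` is the min-word of `M`: the list of the smaller elements of the pairs of `M`,
sorted by the larger elements. -/
def IsMinWord (n : ℕ) (M : Finset (ℕ × ℕ)) (w : Fin n → ℕ) : Prop :=
  ∃ b : Fin n → ℕ, StrictMono b ∧ (∀ i, w i < b i) ∧
    M = Finset.univ.image fun i => (w i, b i)

/-- The number of tiles of `T` containing boxes over both endpoint columns of the
chord with endpoints at step positions `p < q`. -/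
def chordTileCount {n : ℕ} (T : DyckTiling n) (p q : ℕ) : ℕ :=
  (T.tiles.filter fun t =>
    (∃ c ∈ t, (c : ℤ × ℤ).1 = (p : ℤ) + 1 - n) ∧ (∃ c ∈ t, (c : ℤ × ℤ).1 = (q : ℤ) - n)).card

/-- A Dyck tableau of order `n` over the zigzag path `Z` of order `n+1`: a skew shape
`Z/μ` with `n` dots, one in each column of the skew shape through a valley of `Z`. -/
structure DyckTableau (n : ℕ) (Z : DyckPath (n + 1)) where
  upper : DyckPath (n + 1)
  below : ∀ x : ℤ, Z.ht x ≤ upper.ht x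
  dots : Finset (ℤ × ℤ)
  sub : dots ⊆ skewCells Z upper
  card_dots : dots.card = n
  valley : ∀ x : ℤ, Z.ht (x - 1) = Z.ht x + 1 → Z.ht (x + 1) = Z.ht x + 1 →
    (dots.filter fun c => c.1 = x).card = 1

/-- The `q`-integer `[m]_q = 1 + q + ⋯ + q^(m-1)` as a polynomial. -/
def qint (m : ℕ) : Polynomial ℤ := ∑ i ∈ Finset.range m, Polynomial.X ^ i

/-- The `q`-factorial `[n]_q!`. -/
def qfact (n : ℕ) : Polynomial ℤ := ∏ i ∈ Finset.range n, qint (i + 1)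

/-!
Spreading at column `s` displaces the steps of both boundary paths without pairing them
differently, and inserts into both an up step ending at `s` and a down step ending at `s + 1`; it
therefore creates no discrepancy. A nonempty ribbon between `s` and `Q` flips two steps of the upper
path: the one ending at `s + 1` becomes an up step over a down step of the lower path, and the one
ending at `Q` becomes a down step. The latter costs nothing because `Q` comes from the special
column of the tiling, which is the column of the previous growth step, where the lower path goes up.
So the discrepancy increases, by one, exactly when the growth column moves left, that is, when
`p (i + 1) ≤ p i`; for the sequence of a chord labeling this says that `i` is a descent.
-/

variable {n : ℕ}

/-- The path with height function `h` has an up step ending at column `c`. -/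
def UpStepAt (h : ℤ → ℤ) (c : ℤ) : Prop := h c = h (c - 1) + 1

/-- The path with height function `h` has a down step ending at column `c`. -/
def DownStepAt (h : ℤ → ℤ) (c : ℤ) : Prop := h c = h (c - 1) - 1

lemma UpStepAt.not_downStepAt {h : ℤ → ℤ} {c : ℤ} (hup : UpStepAt h c) : ¬ DownStepAt h c := by
  simp only [UpStepAt, DownStepAt] at *
  omega

lemma EligibleCol.upStepAt {h : ℤ → ℤ} {ts : Finset (Finset (ℤ × ℤ))} {c : ℤ}
    (hc : EligibleCol h ts c) : UpStepAt h c := hc.1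

/-- The discrepancies between a lower and an upper height function, each recorded by the column at
which its two steps end. Indexing by all columns rather than by step positions lets paths of
different orders be compared. -/
def discrepancyCols (lo up : ℤ → ℤ) : Set ℤ := {c | DownStepAt lo c ∧ UpStepAt up c}

/-- The column at which the step in position `i` of a path of order `n` ends. -/
def stepCol (i : Fin (2 * n)) : ℤ := i + 1 - n

lemma stepCol_injective : Function.Injective (stepCol (n := n)) := fun i j h => by
  simp only [stepCol] at h
  omega

namespace DyckPath

lemma ht_eq_sum (P : DyckPath n) (x : ℤ) :
    P.ht x = ∑ i with stepCol i ≤ x, if P.step i then 1 else -1 := by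
  have hcol (i : Fin (2 * n)) : stepCol i ≤ x ↔ (i : ℤ) < x + n := by
    simp only [stepCol]
    omega
  simp only [ht, card_filter, Nat.cast_sum, ← sum_sub_distrib, sum_filter, hcol]
  refine sum_congr rfl fun i _ => ?_
  cases P.step i <;> simp [apply_ite]

lemma ht_sub_ht_sub_one (P : DyckPath n) (c : ℤ) :
    P.ht c - P.ht (c - 1) = ∑ i with stepCol i = c, if P.step i then 1 else -1 := by
  simp only [ht_eq_sum, sum_filter, ← sum_sub_distrib]
  refine sum_congr rfl fun i _ => ?_
  split_ifs <;> omega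

lemma ht_stepCol (P : DyckPath n) (i : Fin (2 * n)) :
    P.ht (stepCol i) = P.ht (stepCol i - 1) + if P.step i then 1 else -1 := by
  have h := P.ht_sub_ht_sub_one (stepCol i)
  simp only [stepCol_injective.eq_iff, filter_eq', mem_univ, if_true, sum_singleton] at h
  omega

lemma ht_eq_ht_sub_one_of_notMem_range (P : DyckPath n) {c : ℤ}
    (hc : c ∉ Set.range (stepCol (n := n))) : P.ht c = P.ht (c - 1) := by
  have h := P.ht_sub_ht_sub_one c
  rwa [filter_false_of_mem fun i _ hi => hc ⟨i, hi⟩, sum_empty, sub_eq_zero] at h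

lemma upStepAt_stepCol (P : DyckPath n) {i : Fin (2 * n)} :
    UpStepAt P.ht (stepCol i) ↔ P.step i = true := by
  rw [UpStepAt, ht_stepCol]
  cases P.step i <;> simp

lemma downStepAt_stepCol (P : DyckPath n) {i : Fin (2 * n)} :
    DownStepAt P.ht (stepCol i) ↔ P.step i = false := by
  rw [DownStepAt, ht_stepCol]
  cases P.step i <;> grind

lemma discrepancyCols_eq_image (P Q : DyckPath n) :
    discrepancyCols P.ht Q.ht = stepCol '' {i | P.step i = false ∧ Q.step i = true} := by
  ext c
  by_cases hc : c ∈ Set.range (stepCol (n := n))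
  · obtain ⟨i, rfl⟩ := hc
    rw [stepCol_injective.mem_set_image]
    exact and_congr P.downStepAt_stepCol Q.upStepAt_stepCol
  · refine iff_of_false (fun h => ?_) fun h => hc (Set.image_subset_range _ _ h)
    have hup : Q.ht c = Q.ht (c - 1) + 1 := h.2
    have hflat : Q.ht c = Q.ht (c - 1) := Q.ht_eq_ht_sub_one_of_notMem_range hc
    omega

end DyckPath

lemma DyckTiling.coe_dis_eq_encard (T : DyckTiling n) :
    (T.dis : ℕ∞) = (discrepancyCols T.lower.ht T.upper.ht).encard := by
  rw [DyckPath.discrepancyCols_eq_image, stepCol_injective.encard_image, dis,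
    ← Set.encard_coe_eq_coe_finsetCard]
  simp

/-- The column to which spreading at column `s` moves the end of a step ending at column `c`. -/
def shiftCol (s c : ℤ) : ℤ := if c ≤ s then c - 1 else c + 1

lemma shiftCol_of_lt {s c : ℤ} (h : s < c) : shiftCol s c = c + 1 := if_neg h.not_ge

lemma shiftCol_injective (s : ℤ) : Function.Injective (shiftCol s) := fun a b h => by
  simp only [shiftCol] at h
  split_ifs at h <;> omega

lemma mem_range_shiftCol_iff {s c : ℤ} : c ∈ Set.range (shiftCol s) ↔ c ≠ s ∧ c ≠ s + 1 := by
  constructor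
  · rintro ⟨a, rfl⟩
    simp only [shiftCol]
    split_ifs <;> omega
  · intro hc
    rcases hc.1.lt_or_gt with h | h
    · exact ⟨c + 1, by rw [shiftCol, if_pos (by omega)]; ring⟩
    · exact ⟨c - 1, by rw [shiftCol_of_lt (by omega)]; ring⟩

section Spread

lemma spreadHt_shiftCol_sub (P : DyckPath n) (s c : ℤ) :
    spreadHt P s (shiftCol s c) - spreadHt P s (shiftCol s c - 1) = P.ht c - P.ht (c - 1) := by
  rcases le_or_gt c s with h | h
  · simp [spreadHt, shiftCol, h, show c - 1 < s by omega, show c - 1 - 1 < s by omega]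
  · simp [spreadHt, shiftCol, h.not_ge, h.not_gt, h.ne', show ¬ c + 1 < s by omega,
      show c + 1 ≠ s by omega]

lemma upStepAt_spreadHt_shiftCol (P : DyckPath n) {s c : ℤ} :
    UpStepAt (spreadHt P s) (shiftCol s c) ↔ UpStepAt P.ht c := by
  have := spreadHt_shiftCol_sub P s c
  simp only [UpStepAt]
  omega

lemma downStepAt_spreadHt_shiftCol (P : DyckPath n) {s c : ℤ} :
    DownStepAt (spreadHt P s) (shiftCol s c) ↔ DownStepAt P.ht c := by
  have := spreadHt_shiftCol_sub P s c
  simp only [DownStepAt]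
  omega

lemma upStepAt_spreadHt_self (P : DyckPath n) (s : ℤ) : UpStepAt (spreadHt P s) s := by
  simp [UpStepAt, spreadHt]

lemma downStepAt_spreadHt_add_one (P : DyckPath n) (s : ℤ) :
    DownStepAt (spreadHt P s) (s + 1) := by
  simp [DownStepAt, spreadHt]

lemma discrepancyCols_spreadHt (P Q : DyckPath n) (s : ℤ) :
    discrepancyCols (spreadHt P s) (spreadHt Q s) =
      shiftCol s '' discrepancyCols P.ht Q.ht := by
  ext c
  by_cases hc : c ∈ Set.range (shiftCol s)
  · obtain ⟨c, rfl⟩ := hc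
    rw [(shiftCol_injective s).mem_set_image]
    exact and_congr (downStepAt_spreadHt_shiftCol P) (upStepAt_spreadHt_shiftCol Q)
  · refine iff_of_false ?_ fun h => hc (Set.image_subset_range _ _ h)
    rintro ⟨hdown, hup⟩
    rw [mem_range_shiftCol_iff, ← not_or, not_not] at hc
    rcases hc with rfl | rfl
    · exact (upStepAt_spreadHt_self P c).not_downStepAt hdown
    · exact hup.not_downStepAt (downStepAt_spreadHt_add_one Q s)

lemma mem_spreadTile {s : ℤ} {t : Finset (ℤ × ℤ)} {c z : ℤ} :
    (c, z) ∈ spreadTile s t ↔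
      (c + 1 ≤ s ∧ (c + 1, z) ∈ t) ∨ (c = s ∧ (c, z - 1) ∈ t) ∨
        (s ≤ c - 1 ∧ (c - 1, z) ∈ t) := by
  simp [spreadTile, sub_eq_iff_eq_add, ← eq_sub_iff_add_eq, and_comm]

lemma shiftCol_mem_spreadTile {s : ℤ} {t : Finset (ℤ × ℤ)} {c z : ℤ} :
    (shiftCol s c, z) ∈ spreadTile s t ↔ (c, z) ∈ t := by
  rw [mem_spreadTile, shiftCol]
  split_ifs with h
  · simp [h, show c - 1 ≠ s by omega, show ¬ s ≤ c - 1 - 1 by omega]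
  · simp [show s ≤ c by omega, show ¬ c + 1 + 1 ≤ s by omega, show c + 1 ≠ s by omega]

lemma spreadTile_injective (s : ℤ) : Function.Injective (spreadTile s) := fun t u h => by
  ext ⟨c, z⟩
  rw [← shiftCol_mem_spreadTile (s := s), h, shiftCol_mem_spreadTile]

lemma spreadTile_singleton {s c : ℤ} (hc : s < c) (z : ℤ) :
    spreadTile s {(c, z)} = {(c + 1, z)} := by
  ext ⟨a, b⟩
  simp only [mem_spreadTile, mem_singleton, Prod.mk.injEq]
  omega

lemma singleton_mem_spreadTiles_iff {s c : ℤ} (hc : s < c) {z : ℤ}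
    {ts : Finset (Finset (ℤ × ℤ))} :
    {(c + 1, z)} ∈ spreadTiles s ts ↔ {(c, z)} ∈ ts := by
  rw [← spreadTile_singleton hc, spreadTiles, (spreadTile_injective s).mem_finset_image]

lemma singleton_notMem_spreadTiles (s z : ℤ) (ts : Finset (Finset (ℤ × ℤ))) :
    {(s, z)} ∉ spreadTiles s ts := by
  simp only [spreadTiles, mem_image, not_exists, not_and]
  intro t _ ht
  have hz : (s, z - 1) ∈ t := by
    have : (s, z) ∈ spreadTile s t := by simp [ht]
    simpa [mem_spreadTile] using this
  have : (shiftCol s s, z - 1) ∈ spreadTile s t := shiftCol_mem_spreadTile.2 hz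
  simp [ht] at this

variable (P : DyckPath n) (ts : Finset (Finset (ℤ × ℤ)))

lemma eligibleCol_spread_self (s : ℤ) : EligibleCol (spreadHt P s) (spreadTiles s ts) s :=
  ⟨upStepAt_spreadHt_self P s, singleton_notMem_spreadTiles _ _ _⟩

lemma not_eligibleCol_spread_add_one (s : ℤ) :
    ¬ EligibleCol (spreadHt P s) (spreadTiles s ts) (s + 1) := fun h =>
  h.upStepAt.not_downStepAt (downStepAt_spreadHt_add_one P s)

lemma eligibleCol_spread_add_one_iff {s c : ℤ} (hc : s < c) :
    EligibleCol (spreadHt P s) (spreadTiles s ts) (c + 1) ↔ EligibleCol P.ht ts c := by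
  have hht : spreadHt P s (c + 1) = P.ht c := by
    simp [spreadHt, show ¬ c + 1 < s by omega, show c + 1 ≠ s by omega]
  have hup := upStepAt_spreadHt_shiftCol P (s := s) (c := c)
  rw [shiftCol_of_lt hc] at hup
  refine and_congr hup (not_congr ?_)
  rw [hht, singleton_mem_spreadTiles_iff hc]

variable {P ts}

lemma isGreatest_eligibleCol_spread_self {s : ℤ} (h : ∀ c, EligibleCol P.ht ts c → c ≤ s) :
    IsGreatest {c | EligibleCol (spreadHt P s) (spreadTiles s ts) c} s := by
  refine ⟨eligibleCol_spread_self P ts s, fun c hc => ?_⟩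
  by_contra! hsc
  rcases (Int.add_one_le_of_lt hsc).eq_or_lt with rfl | hsc'
  · exact not_eligibleCol_spread_add_one P ts s hc
  · rw [← sub_add_cancel c 1, Set.mem_ofPred, eligibleCol_spread_add_one_iff P ts (by omega)] at hc
    have := h _ hc
    omega

lemma isGreatest_eligibleCol_spread_add_one {s c : ℤ} (hsc : s < c)
    (hc : IsGreatest {c | EligibleCol P.ht ts c} c) :
    IsGreatest {c | EligibleCol (spreadHt P s) (spreadTiles s ts) c} (c + 1) := by
  refine ⟨(eligibleCol_spread_add_one_iff P ts hsc).2 hc.1, fun d hd => ?_⟩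
  by_contra! hcd
  rw [← sub_add_cancel d 1, Set.mem_ofPred, eligibleCol_spread_add_one_iff P ts (by omega)] at hd
  have := hc.2 hd
  omega

end Spread

section Ribbon

/-- The height function obtained from `h` by adding a ribbon of boxes at the columns strictly
between `s` and `Q`. -/
def ribbonHt (h : ℤ → ℤ) (s Q x : ℤ) : ℤ := if s < x ∧ x < Q then h x + 2 else h x

/-- The one-box tiles of the ribbon added on top of `h` strictly between the columns `s` and
`Q`. -/
def ribbonTiles (h : ℤ → ℤ) (s Q : ℤ) : Finset (Finset (ℤ × ℤ)) :=
  (Ioo s Q).image fun x => {(x, h x)}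

variable {h : ℤ → ℤ} {s Q c : ℤ}

lemma ribbonHt_of_mem (hs : s < c) (hQ : c < Q) : ribbonHt h s Q c = h c + 2 := if_pos ⟨hs, hQ⟩

lemma ribbonHt_of_le_left (hc : c ≤ s) : ribbonHt h s Q c = h c := if_neg (by omega)

lemma ribbonHt_of_le_right (hc : Q ≤ c) : ribbonHt h s Q c = h c := if_neg (by omega)

lemma singleton_mem_ribbonTiles {z : ℤ} :
    {(c, z)} ∈ ribbonTiles h s Q ↔ (s < c ∧ c < Q) ∧ h c = z := by
  simp [ribbonTiles]

lemma upStepAt_ribbonHt_of_ne (hs : c ≠ s + 1) (hQ : c ≠ Q) :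
    UpStepAt (ribbonHt h s Q) c ↔ UpStepAt h c := by
  simp only [UpStepAt, ribbonHt]
  split_ifs <;> omega

lemma DownStepAt.upStepAt_ribbonHt (hdown : DownStepAt h (s + 1)) (hQ : s + 1 < Q) :
    UpStepAt (ribbonHt h s Q) (s + 1) := by
  simp only [UpStepAt, DownStepAt, add_sub_cancel_right] at *
  rw [ribbonHt_of_mem (by omega) hQ, ribbonHt_of_le_left le_rfl]
  omega

lemma UpStepAt.downStepAt_ribbonHt (hup : UpStepAt h Q) (hs : s + 1 < Q) :
    DownStepAt (ribbonHt h s Q) Q := by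
  simp only [UpStepAt, DownStepAt] at *
  rw [ribbonHt_of_le_right le_rfl, ribbonHt_of_mem (by omega) (by omega)]
  omega

lemma discrepancyCols_ribbonHt {lo : ℤ → ℤ} (hsQ : s + 1 < Q) (hlos : DownStepAt lo (s + 1))
    (hs : DownStepAt h (s + 1)) (hloQ : UpStepAt lo Q) :
    discrepancyCols lo (ribbonHt h s Q) = insert (s + 1) (discrepancyCols lo h) := by
  ext c
  rw [Set.mem_insert_iff]
  rcases eq_or_ne c (s + 1) with rfl | hcs
  · exact iff_of_true ⟨hlos, hs.upStepAt_ribbonHt hsQ⟩ (Or.inl rfl)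
  rcases eq_or_ne c Q with rfl | hcQ
  · have hlo := hloQ.not_downStepAt
    exact iff_of_false (fun hc => hlo hc.1) (not_or.2 ⟨hcs, fun hc => hlo hc.1⟩)
  · rw [or_iff_right hcs]
    exact and_congr_right fun _ => upStepAt_ribbonHt_of_ne hcs hcQ

lemma isGreatest_eligibleCol_ribbon {ts : Finset (Finset (ℤ × ℤ))} (hs : EligibleCol h ts s)
    (hs' : ¬ EligibleCol h ts (s + 1)) (hQ : IsGreatest {c | EligibleCol h ts c} Q) :
    IsGreatest {c | EligibleCol (ribbonHt h s Q) (ts ∪ ribbonTiles h s Q) c} s := by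
  have hsQ : s ≤ Q := hQ.2 hs
  refine ⟨⟨?_, ?_⟩, fun c hc => ?_⟩
  · rw [ribbonHt_of_le_left le_rfl, ribbonHt_of_le_left (sub_one_lt s).le, hs.1]
  · rw [ribbonHt_of_le_left le_rfl, mem_union, singleton_mem_ribbonTiles]
    exact not_or.2 ⟨hs.2, fun hc => hc.1.1.false⟩
  by_contra! hsc
  have hup : UpStepAt (ribbonHt h s Q) c := hc.upStepAt
  have htile := hc.2
  rw [mem_union, singleton_mem_ribbonTiles, not_or] at htile
  rcases lt_trichotomy c Q with hcQ | rfl | hcQ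
  · exact htile.2 ⟨⟨hsc, hcQ⟩, by rw [ribbonHt_of_mem hsc hcQ]; ring⟩
  · have hne : c ≠ s + 1 := fun hcs => hs' (hcs ▸ hQ.1)
    have hup' : UpStepAt h c := hQ.1.upStepAt
    exact hup.not_downStepAt (hup'.downStepAt_ribbonHt (by omega))
  · rw [ribbonHt_of_le_right hcQ.le] at htile
    have hup' : UpStepAt h c := by
      rwa [UpStepAt, ribbonHt_of_le_right hcQ.le, ribbonHt_of_le_right (by omega)] at hup
    exact hcQ.not_ge (hQ.2 ⟨hup', htile.1⟩)

end Ribbon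

lemma specialCol_iff_isGreatest {T : DyckTiling n} {c : ℤ} :
    SpecialCol T c ↔ IsGreatest {c | EligibleCol T.upper.ht T.tiles c} c := Iff.rfl

namespace RibbonGrowRel

variable {T : DyckTiling n} {s c : ℤ} {T' : DyckTiling (n + 1)}

lemma lower_ht_eq (h : RibbonGrowRel T s T') : T'.lower.ht = spreadHt T.lower s := funext h.1

lemma exists_eq_ribbon (h : RibbonGrowRel T s T') :
    ∃ Q, IsGreatest {c | EligibleCol (spreadHt T.upper s) (spreadTiles s T.tiles) c} Q ∧
      T'.upper.ht = ribbonHt (spreadHt T.upper s) s Q ∧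
      T'.tiles = spreadTiles s T.tiles ∪ ribbonTiles (spreadHt T.upper s) s Q := by
  obtain ⟨-, Q, hQ, hmax, hup, htiles⟩ := h
  exact ⟨Q, ⟨hQ, hmax⟩, funext hup, htiles⟩

lemma upper_ht_eq_ribbonHt (h : RibbonGrowRel T s T') {Q : ℤ}
    (hQ : IsGreatest {c | EligibleCol (spreadHt T.upper s) (spreadTiles s T.tiles) c} Q) :
    T'.upper.ht = ribbonHt (spreadHt T.upper s) s Q := by
  obtain ⟨Q', hQ', hup, -⟩ := h.exists_eq_ribbon
  rw [hup, hQ'.unique hQ]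

lemma specialCol (h : RibbonGrowRel T s T') : SpecialCol T' s := by
  obtain ⟨Q, hQ, hup, htiles⟩ := h.exists_eq_ribbon
  rw [specialCol_iff_isGreatest, hup, htiles]
  exact isGreatest_eligibleCol_ribbon (eligibleCol_spread_self _ _ _)
    (not_eligibleCol_spread_add_one _ _ _) hQ

lemma upStepAt_lower (h : RibbonGrowRel T s T') : UpStepAt T'.lower.ht s :=
  h.lower_ht_eq ▸ upStepAt_spreadHt_self T.lower s

lemma dis_eq_of_forall_le (h : RibbonGrowRel T s T')
    (hs : ∀ c, EligibleCol T.upper.ht T.tiles c → c ≤ s) : T'.dis = T.dis := by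
  have hup : T'.upper.ht = spreadHt T.upper s := by
    rw [h.upper_ht_eq_ribbonHt (isGreatest_eligibleCol_spread_self hs)]
    exact funext fun x => (le_total x s).elim ribbonHt_of_le_left ribbonHt_of_le_right
  rw [← Nat.cast_inj (R := ℕ∞), T'.coe_dis_eq_encard, T.coe_dis_eq_encard, h.lower_ht_eq, hup,
    discrepancyCols_spreadHt, (shiftCol_injective s).encard_image]

lemma dis_eq_add_one (h : RibbonGrowRel T s T') (hc : SpecialCol T c)
    (hlow : UpStepAt T.lower.ht c) (hsc : s < c) : T'.dis = T.dis + 1 := by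
  have hup := h.upper_ht_eq_ribbonHt
    (isGreatest_eligibleCol_spread_add_one hsc (specialCol_iff_isGreatest.1 hc))
  have hloQ : UpStepAt (spreadHt T.lower s) (c + 1) := by
    rwa [← shiftCol_of_lt hsc, upStepAt_spreadHt_shiftCol]
  have hdown := downStepAt_spreadHt_add_one T.upper s
  have hnew : s + 1 ∉ discrepancyCols (spreadHt T.lower s) (spreadHt T.upper s) :=
    fun hmem => hmem.2.not_downStepAt hdown
  rw [← Nat.cast_inj (R := ℕ∞), Nat.cast_add_one, T'.coe_dis_eq_encard, T.coe_dis_eq_encard,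
    h.lower_ht_eq, hup, discrepancyCols_ribbonHt (by omega)
      (downStepAt_spreadHt_add_one T.lower s) hdown hloQ,
    Set.encard_insert_of_notMem hnew, discrepancyCols_spreadHt,
    (shiftCol_injective s).encard_image]

end RibbonGrowRel

lemma DyckTiling.dis_zero (T : DyckTiling 0) : T.dis = 0 := by simp [dis]

lemma not_eligibleCol_zero (T : DyckTiling 0) (c : ℤ) :
    ¬ EligibleCol T.upper.ht T.tiles c := by
  simp [EligibleCol, DyckPath.ht]

namespace IsDTR

variable {p : Fin (n + 1) → ℕ} {T : DyckTiling (n + 1)}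

lemma specialCol (h : IsDTR (n + 1) p T) : SpecialCol T ((p (Fin.last n) : ℤ) - n) := by
  cases h with
  | cons _ _ _ _ _ hgrow => exact hgrow.specialCol

lemma upStepAt_lower (h : IsDTR (n + 1) p T) :
    UpStepAt T.lower.ht ((p (Fin.last n) : ℤ) - n) := by
  cases h with
  | cons _ _ _ _ _ hgrow => exact hgrow.upStepAt_lower

lemma dis_eq_card_weakDescents (h : IsDTR (n + 1) p T) :
    T.dis = #{i : Fin n | p i.succ ≤ p i.castSucc} := by
  induction n with
  | zero =>
    cases h with
    | cons _ _ T₀ _ _ hgrow =>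
      rw [hgrow.dis_eq_of_forall_le fun c hc => absurd hc (not_eligibleCol_zero T₀ c)]
      simpa using T₀.dis_zero
  | succ n ih =>
    cases h with
    | cons _ _ T₀ _ hT₀ hgrow =>
      simp only [card_filter, Fin.sum_univ_castSucc, Fin.succ_castSucc, Fin.succ_last,
        Nat.succ_eq_add_one]
      rw [← card_filter, ← ih hT₀]
      split_ifs with hlast
      · refine hgrow.dis_eq_add_one hT₀.specialCol hT₀.upStepAt_lower ?_
        push_cast
        omega
      · refine hgrow.dis_eq_of_forall_le fun c hc => (hT₀.specialCol.2 c hc).trans ?_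
        push_cast
        omega

end IsDTR

section SeqOf

variable {P : DyckPath n} (C : ChordLabeling P) {i j : Fin n}

lemma seqOf_lt_seqOf (hij : i < j) (hl : C.l i < C.l j) : seqOf C i < seqOf C j := by
  refine add_lt_add_of_lt_of_le (card_lt_card ?_) (card_le_card ?_)
  · refine ssubset_iff_of_subset (monotone_filter_right _ fun k _ hk => ?_) |>.2
      ⟨i, by simp [hij, hl], by simp⟩
    exact ⟨hk.1.trans hij, hk.2.trans hl⟩
  · exact monotone_filter_right _ fun k _ hk => ⟨hk.1.trans hij, hk.2.trans hl⟩

lemma seqOf_le_seqOf (hij : i ⋖ j) (hl : C.l j < C.l i) : seqOf C j ≤ seqOf C i := by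
  have hlr : C.l i < C.r i := (C.chord i).1
  have lt_of_lt {k : Fin n} (hk : k < j) (hne : k ≠ i) : k < i := (hij.le_of_lt hk).lt_of_ne hne
  refine add_le_add (card_le_card ?_) (card_le_card ?_)
  · refine monotone_filter_right _ fun k _ hk => ⟨lt_of_lt hk.1 ?_, hk.2.trans hl⟩
    rintro rfl
    exact hl.not_gt hk.2
  · refine monotone_filter_right _ fun k _ hk => ⟨lt_of_lt hk.1 ?_, hk.2.trans hl⟩
    rintro rfl
    exact (hl.trans hlr).not_gt hk.2

lemma seqOf_le_seqOf_iff (hij : i ⋖ j) : seqOf C j ≤ seqOf C i ↔ C.l j < C.l i := by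
  refine ⟨fun hle => ?_, seqOf_le_seqOf C hij⟩
  by_contra! hl
  exact hle.not_gt (seqOf_lt_seqOf C hij.lt (hl.lt_of_ne (C.inj.ne hij.ne)))

end SeqOf

lemma castSucc_covBy_succ (i : Fin n) : i.castSucc ⋖ i.succ := by simp

lemma nextIdx_castSucc (i : Fin n) : nextIdx i.castSucc = i.succ :=
  Fin.ext <| by simp [nextIdx]

lemma card_descentFinset (w : Fin (n + 1) → ℕ) :
    #(descentFinset w) = #{i : Fin n | w i.succ < w i.castSucc} := by
  simp only [descentFinset, card_filter, Fin.sum_univ_castSucc, nextIdx_castSucc]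
  simp

/-- For each Dyck path `λ` of order `n` and each linear extension
`σ ∈ 𝓛(P_λ)`, `dis(DTR(λ,σ)) = des(σ)`. -/
theorem dis_DTR_eq_des (n : ℕ) (lam : DyckPath n) (σ : Equiv.Perm (Fin n))
    (hσ : LinExt lam σ) (T : DyckTiling n) (hT : IsDTRof lam σ T) :
    T.dis = permDes σ := by
  obtain ⟨C, hC, hDTR⟩ := hT
  rcases n with - | n
  · simp [T.dis_zero, permDes, descentFinset]
  calc T.dis = #{i : Fin n | seqOf C i.succ ≤ seqOf C i.castSucc} :=
        hDTR.dis_eq_card_weakDescents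
    _ = #{i : Fin n | C.l i.succ < C.l i.castSucc} := by
        simp only [seqOf_le_seqOf_iff C (castSucc_covBy_succ _)]
    _ = #{i : Fin n | permWord σ i.succ < permWord σ i.castSucc} := by
        simp only [← hC _ _]
        rfl
    _ = permDes σ := (card_descentFinset _).symm

end
end

section
/- There is a bijection between the cover-inclusive Dyck tilings whose lower path is the zigzag path zigzag_n = (UD)^n and the Dyck tableaux of order n. -/
open Finset

noncomputable section

/-!
Over the zigzag path, cover-inclusiveness forces every tile to stay at a constant level, and a
tile with several boxes to begin and end in valley columns. A tile above a one-box tile is itself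
a single box, so in each peak column the tiles with several boxes lie below the one-box tiles; the
mark of the column is the number of the former. Any marks can occur, and they determine the
tiling: two boxes at level `k` share a tile if and only if every peak column from one to the other
has mark larger than `k`.

The peak columns of the zigzag path of order `n` are the valley columns of that of order `n + 1`.
Surrounding the upper path by an up step and a down step makes room for one more box in each of
these columns, so that a mark, ranging over `0, …, h` in a column of `h` boxes, becomes the level
of a dot among `h + 1` boxes.
-/

lemma exists_eq_Icc_of_ordConnected {α : Type*} [LinearOrder α] [LocallyFiniteOrder α]
    {s : Finset α} (hs : s.Nonempty) (hconn : (s : Set α).OrdConnected) :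
    ∃ a b, a ≤ b ∧ s = Icc a b :=
  ⟨s.min' hs, s.max' hs, s.min'_le_max' hs, Subset.antisymm
    (fun y hy => mem_Icc.2 ⟨s.min'_le y hy, s.le_max' y hy⟩)
    fun _ hy => hconn.out (s.min'_mem hs) (s.max'_mem hs) (mem_Icc.1 hy)⟩

/-! ### Dyck paths and their heights -/

/-- Height of the word `s` (`true` an up step, `false` a down step) after its letters in
positions `< k`. Any integer `k` is allowed, to match the columns of `DyckPath.ht`. -/
def wordHt {N : ℕ} (s : Fin N → Bool) (k : ℤ) : ℤ :=
  ((univ.filter fun i : Fin N => ((i : ℕ) : ℤ) < k ∧ s i = true).card : ℤ) -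
    ((univ.filter fun i : Fin N => ((i : ℕ) : ℤ) < k ∧ s i = false).card : ℤ)

section wordHt

variable {N : ℕ} (s : Fin N → Bool)

lemma wordHt_eq_sum (k : ℤ) :
    wordHt s k = ∑ i : Fin N,
      if ((i : ℕ) : ℤ) < k then (if s i = true then (1 : ℤ) else -1) else 0 := by
  unfold wordHt
  rw [card_filter, card_filter]
  push_cast
  rw [← sum_sub_distrib]
  refine sum_congr rfl fun i _ => ?_
  cases s i <;> by_cases h : ((i : ℕ) : ℤ) < k <;> simp [h]

lemma wordHt_add_one (i : Fin N) :
    wordHt s ((i : ℕ) + 1) = wordHt s (i : ℕ) + if s i = true then 1 else -1 := by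
  rw [wordHt_eq_sum, wordHt_eq_sum, ← sub_eq_iff_eq_add', ← sum_sub_distrib,
    sum_eq_single i]
  · rw [if_pos (Int.lt_add_one_of_le le_rfl), if_neg (lt_irrefl _), sub_zero]
  · intro j _ hj
    have hne : (j : ℕ) ≠ i := Fin.val_ne_of_ne hj
    by_cases h : ((j : ℕ) : ℤ) < (i : ℕ)
    · rw [if_pos h, if_pos (h.trans (lt_add_one _)), sub_self]
    · have h' : ¬((j : ℕ) : ℤ) < (i : ℕ) + 1 := by omega
      rw [if_neg h, if_neg h', sub_self]
  · simp

lemma wordHt_of_nonpos {k : ℤ} (hk : k ≤ 0) : wordHt s k = 0 := by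
  rw [wordHt_eq_sum]
  exact sum_eq_zero fun i _ => if_neg (by omega)

lemma wordHt_of_length_le {k : ℤ} (hk : N ≤ k) :
    wordHt s k = 2 * ((univ.filter fun i => s i = true).card : ℤ) - N := by
  have htotal := card_filter_add_card_filter_not (s := (univ : Finset (Fin N)))
    (fun i => s i = true)
  have hall (b : Bool) : (univ.filter fun i : Fin N => ((i : ℕ) : ℤ) < k ∧ s i = b) =
      univ.filter fun i => s i = b :=
    filter_congr fun i _ => and_iff_right (by omega)
  simp only [Bool.not_eq_true, card_univ, Fintype.card_fin] at htotal
  rw [wordHt, hall, hall]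
  omega

lemma wordHt_injective : Function.Injective (wordHt : (Fin N → Bool) → ℤ → ℤ) := by
  intro s t h
  funext i
  have hs := wordHt_add_one s i
  rw [h, wordHt_add_one] at hs
  cases hi : s i <;> cases hj : t i <;> simp [hi, hj] at hs ⊢

lemma wordHt_decide {f : ℤ → ℤ} (hf : f 0 = 0)
    (hstep : ∀ k : ℤ, 0 ≤ k → k < N → f (k + 1) = f k + 1 ∨ f (k + 1) = f k - 1)
    {k : ℤ} (hk : 0 ≤ k) (hkN : k ≤ N) :
    wordHt (fun i : Fin N => decide (f ((i : ℕ) + 1) = f (i : ℕ) + 1)) k = f k := by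
  induction k, hk using Int.leInduction with
  | base => rw [wordHt_of_nonpos _ le_rfl, hf]
  | succ k hk ih =>
    lift k to ℕ using hk
    rw [wordHt_add_one _ ⟨k, by omega⟩, ih (by omega)]
    have := hstep k (by omega) (by omega)
    simp only [decide_eq_true_eq]
    split_ifs <;> omega

end wordHt

/-- `f` is the height function of a Dyck path of order `n`, extended by zero to all columns. -/
structure IsDyckHeight (n : ℕ) (f : ℤ → ℤ) : Prop where
  eq_zero_of_le : ∀ x : ℤ, x ≤ -n → f x = 0
  eq_zero_of_ge : ∀ x : ℤ, n ≤ x → f x = 0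
  step : ∀ x : ℤ, -n ≤ x → x < n → f (x + 1) = f x + 1 ∨ f (x + 1) = f x - 1
  nonneg : ∀ x : ℤ, 0 ≤ f x

namespace DyckPath

attribute [ext] DyckPath

variable {n : ℕ} (P : DyckPath n)

lemma ht_eq_wordHt (x : ℤ) : P.ht x = wordHt P.step (x + n) := rfl

lemma ht_injective : Function.Injective (ht : DyckPath n → ℤ → ℤ) := by
  intro P Q h
  refine DyckPath.ext (wordHt_injective (funext fun k => ?_))
  simpa only [ht_eq_wordHt, sub_add_cancel] using congrFun h (k - n)

lemma ht_add_one {x : ℤ} (hx : -n ≤ x) (hx' : x < n) :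
    P.ht (x + 1) = P.ht x + if P.step ⟨(x + n).toNat, by omega⟩ = true then 1 else -1 := by
  have h := wordHt_add_one P.step ⟨(x + n).toNat, by omega⟩
  rwa [Int.toNat_of_nonneg (by omega), add_right_comm] at h

lemma isDyckHeight_ht : IsDyckHeight n P.ht where
  eq_zero_of_le x hx := wordHt_of_nonpos _ (by omega)
  eq_zero_of_ge x hx := by
    rw [ht_eq_wordHt, wordHt_of_length_le _ (by omega), P.balanced]
    push_cast
    ring
  step x hx hx' := by
    rw [P.ht_add_one hx hx']
    split_ifs <;> omega
  nonneg x := by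
    rcases le_total x (-n) with h | h
    · exact (wordHt_of_nonpos _ (by omega)).ge
    rcases le_total (n : ℤ) x with h' | h'
    · rw [ht_eq_wordHt, wordHt_of_length_le _ (by omega), P.balanced]
      omega
    have hprefix := P.nonneg (x + n).toNat (by omega)
    have hlt (i : ℕ) : i < (x + n).toNat ↔ (i : ℤ) < x + n := by omega
    simp only [hlt] at hprefix
    exact sub_nonneg.2 (Int.ofNat_le.2 hprefix)

lemma ht_of_le {x : ℤ} (hx : x ≤ -n) : P.ht x = 0 := P.isDyckHeight_ht.eq_zero_of_le x hx

lemma ht_of_ge {x : ℤ} (hx : n ≤ x) : P.ht x = 0 := P.isDyckHeight_ht.eq_zero_of_ge x hx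

lemma ht_nonneg (x : ℤ) : 0 ≤ P.ht x := P.isDyckHeight_ht.nonneg x

lemma ht_le (x : ℤ) : P.ht x ≤ n := by
  have hup : (univ.filter fun i : Fin (2 * n) => ((i : ℕ) : ℤ) < x + n ∧ P.step i = true).card ≤
      n :=
    (card_le_card (monotone_filter_right _ fun _ _ h => h.2)).trans_eq P.balanced
  unfold ht
  omega

lemma mem_Ioo_of_ht_pos {x : ℤ} (hx : 0 < P.ht x) : -n < x ∧ x < n := by
  refine ⟨?_, ?_⟩ <;> by_contra! h
  · exact hx.ne' (P.ht_of_le h)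
  · exact hx.ne' (P.ht_of_ge h)

lemma ht_parity {x : ℤ} (hx : -n ≤ x) (hx' : x ≤ n) : (P.ht x - x - n) % 2 = 0 := by
  induction x, hx using Int.leInduction with
  | base => rw [P.ht_of_le le_rfl]; omega
  | succ x hx ih =>
    have := P.isDyckHeight_ht.step x hx (by omega)
    have := ih (by omega)
    omega

lemma ht_le_ht_add_one {x y : ℤ} (hy : x - 1 ≤ y) (hy' : y ≤ x + 1) : P.ht x ≤ P.ht y + 1 := by
  have hnonneg := P.ht_nonneg y
  rcases le_or_gt (P.ht x) 0 with h | h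
  · omega
  have hx := P.mem_Ioo_of_ht_pos h
  have hnext := P.isDyckHeight_ht.step x (by omega) (by omega)
  have hprev := P.isDyckHeight_ht.step (x - 1) (by omega) (by omega)
  rw [sub_add_cancel] at hprev
  obtain rfl | rfl | rfl : y = x - 1 ∨ y = x ∨ y = x + 1 := by omega
  all_goals omega

lemma wordHt_ofHeight {f : ℤ → ℤ} (hf : IsDyckHeight n f) {k : ℤ} (hk : 0 ≤ k)
    (hkn : k ≤ (2 * n : ℕ)) :
    wordHt (fun i : Fin (2 * n) => decide (f ((i : ℕ) + 1 - n) = f ((i : ℕ) - n) + 1)) k =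
      f (k - n) := by
  refine wordHt_decide (f := fun k => f (k - n)) (hf.eq_zero_of_le _ (by omega))
    (fun k hk hkn => ?_) hk hkn
  rw [add_sub_right_comm]
  exact hf.step (k - n) (by omega) (by omega)

/-- The Dyck path with a prescribed height function. -/
def ofHeight {f : ℤ → ℤ} (hf : IsDyckHeight n f) : DyckPath n where
  step i := decide (f ((i : ℕ) + 1 - n) = f ((i : ℕ) - n) + 1)
  balanced := by
    have hend := wordHt_ofHeight hf (k := (2 * n : ℕ)) (by omega) le_rfl
    rw [wordHt_of_length_le _ le_rfl, hf.eq_zero_of_ge _ (by omega)] at hend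
    omega
  nonneg k hk := by
    have hk := wordHt_ofHeight hf (k := k) (by omega) (by omega)
    have := hf.nonneg (k - n)
    simp only [wordHt, Nat.cast_lt] at hk
    omega

lemma ht_ofHeight {f : ℤ → ℤ} (hf : IsDyckHeight n f) : (ofHeight hf).ht = f := by
  funext x
  rcases le_total x (-n) with h | h
  · rw [ht_of_le _ h, hf.eq_zero_of_le x h]
  rcases le_total (n : ℤ) x with h' | h'
  · rw [ht_of_ge _ h', hf.eq_zero_of_ge x h']
  rw [ht_eq_wordHt]
  exact (wordHt_ofHeight hf (by omega) (by omega)).trans (by rw [add_sub_cancel_right])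

/-- `P` surrounded by an up step and a down step. -/
def raise : DyckPath (n + 1) :=
  ofHeight (f := fun x => if -n ≤ x ∧ x ≤ n then P.ht x + 1 else 0)
    { eq_zero_of_le := fun x hx => if_neg (by omega)
      eq_zero_of_ge := fun x hx => if_neg (by omega)
      step := fun x hx hx' => by
        by_cases hleft : x < -n
        · rw [if_pos (by omega), if_neg (by omega), P.ht_of_le (by omega)]
          omega
        by_cases hright : n ≤ x
        · rw [if_neg (by omega), if_pos (by omega), P.ht_of_ge hright]
          omega
        have := P.isDyckHeight_ht.step x (by omega) (by omega)
        rw [if_pos (by omega), if_pos (by omega)]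
        omega
      nonneg := fun x => by
        have := P.ht_nonneg x
        split_ifs <;> omega }

lemma ht_raise (x : ℤ) : P.raise.ht x = if -n ≤ x ∧ x ≤ n then P.ht x + 1 else 0 :=
  congrFun (ht_ofHeight _) x

lemma raise_injective : Function.Injective (raise : DyckPath n → DyckPath (n + 1)) := by
  intro P Q h
  refine ht_injective (funext fun x => ?_)
  by_cases hx : -n ≤ x ∧ x ≤ n
  · have hraise := congrArg (fun R => R.ht x) h
    simpa only [ht_raise, if_pos hx, add_left_inj] using hraise
  · have hx' : x ≤ -n ∨ n ≤ x := by omega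
    rcases hx' with hx' | hx'
    · rw [P.ht_of_le hx', Q.ht_of_le hx']
    · rw [P.ht_of_ge hx', Q.ht_of_ge hx']

lemma exists_raise_eq (Q : DyckPath (n + 1)) (hQ : ∀ x : ℤ, -n ≤ x → x ≤ n → 0 < Q.ht x) :
    ∃ P : DyckPath n, P.raise = Q := by
  have houter (x : ℤ) (hx : ¬(-n ≤ x ∧ x ≤ n)) : Q.ht x = 0 := by
    by_contra h
    have := Q.mem_Ioo_of_ht_pos (lt_of_le_of_ne (Q.ht_nonneg x) (Ne.symm h))
    omega
  have hdescend {x : ℤ} (hx : x = -n ∨ x = n) : Q.ht x = 1 := by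
    have := hQ x (by omega) (by omega)
    rcases hx with rfl | rfl
    · have := Q.ht_le_ht_add_one (x := -n) (y := -n - 1) le_rfl (by omega)
      have := houter (-n - 1) (by omega)
      omega
    · have := Q.ht_le_ht_add_one (x := n) (y := n + 1) (by omega) le_rfl
      have := houter (n + 1) (by omega)
      omega
  have hf : IsDyckHeight n fun x => if -n ≤ x ∧ x ≤ n then Q.ht x - 1 else 0 :=
    { eq_zero_of_le := fun x hx => by
        split_ifs with h
        · rw [hdescend (by omega), sub_self]
        · rfl
      eq_zero_of_ge := fun x hx => by
        split_ifs with h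
        · rw [hdescend (by omega), sub_self]
        · rfl
      step := fun x hx hx' => by
        have := Q.isDyckHeight_ht.step x (by omega) (by omega)
        rw [if_pos (by omega), if_pos (by omega)]
        omega
      nonneg := fun x => by
        split_ifs with h
        · have := hQ x h.1 h.2
          omega
        · exact le_rfl }
  refine ⟨ofHeight hf, ht_injective (funext fun x => ?_)⟩
  rw [ht_raise, ht_ofHeight]
  split_ifs with h
  · ring
  · exact (houter x h).symm

/-- `Z` is the zigzag path `(UD)^n`. -/
def IsZigzag (Z : DyckPath n) : Prop := ∀ i : Fin (2 * n), Z.step i = decide ((i : ℕ) % 2 = 0)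

namespace IsZigzag

variable {Z : DyckPath n} (hZ : Z.IsZigzag)

include hZ

lemma ht_eq {x : ℤ} (hx : -n ≤ x) (hx' : x ≤ n) : Z.ht x = (x + n) % 2 := by
  induction x, hx using Int.leInduction with
  | base => rw [Z.ht_of_le le_rfl]; omega
  | succ x hx ih =>
    rw [Z.ht_add_one hx (by omega), ih (by omega), hZ]
    simp only [decide_eq_true_eq]
    split_ifs <;> omega

lemma ht_le_ht (P : DyckPath n) (x : ℤ) : Z.ht x ≤ P.ht x := by
  have := P.ht_nonneg x
  rcases le_total x (-n) with h | h
  · rwa [Z.ht_of_le h]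
  rcases le_total (n : ℤ) x with h' | h'
  · rwa [Z.ht_of_ge h']
  have := P.ht_parity h h'
  rw [hZ.ht_eq h h']
  omega

end IsZigzag

end DyckPath

lemma mem_skewCells {n : ℕ} {P Q : DyckPath n} {x z : ℤ} :
    (x, z) ∈ skewCells P Q ↔ P.ht x ≤ z ∧ z + 2 ≤ Q.ht x ∧ (z - x - n) % 2 = 0 := by
  simp only [skewCells, mem_filter, mem_product, mem_Icc, and_iff_right_iff_imp]
  intro h
  have := P.ht_nonneg x
  have := Q.ht_le x
  have := Q.mem_Ioo_of_ht_pos (x := x) (by omega)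
  omega

/-! ### Boxes over the zigzag path -/

/-- The bottom corner of the box in column `x` at level `k` above the zigzag path of order `n`;
the boxes of level `0` are those resting on that path. -/
def zigzagBox (n k : ℕ) (x : ℤ) : ℤ × ℤ := (x, 2 * k + (x + n) % 2)

section zigzagBox

variable {n k l : ℕ} {x y : ℤ}

lemma zigzagBox_inj : zigzagBox n k x = zigzagBox n l y ↔ k = l ∧ x = y := by
  simp only [zigzagBox, Prod.mk.injEq]
  constructor
  · rintro ⟨rfl, h⟩
    omega
  · rintro ⟨rfl, rfl⟩
    exact ⟨rfl, rfl⟩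

lemma zigzagBox_mem_image {s : Finset ℤ} :
    zigzagBox n l y ∈ s.image (zigzagBox n k) ↔ l = k ∧ y ∈ s := by
  simp only [mem_image, zigzagBox_inj]
  constructor
  · rintro ⟨_, hy, rfl, rfl⟩
    exact ⟨rfl, hy⟩
  · rintro ⟨rfl, hy⟩
    exact ⟨y, hy, rfl, rfl⟩

lemma exists_zigzagBox_eq {P Q : DyckPath n} {p : ℤ × ℤ} (hp : p ∈ skewCells P Q) :
    ∃ k, zigzagBox n k p.1 = p := by
  obtain ⟨x, z⟩ := p
  have hxz := mem_skewCells.1 hp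
  have := P.ht_nonneg x
  exact ⟨(z / 2).toNat, Prod.ext rfl (by simp only [zigzagBox]; omega)⟩

namespace DyckPath.IsZigzag

variable {Z P : DyckPath n} (hZ : Z.IsZigzag)

include hZ

lemma zigzagBox_mem_skewCells :
    zigzagBox n k x ∈ skewCells Z P ↔ 2 * k + (x + n) % 2 + 2 ≤ P.ht x := by
  rw [zigzagBox, mem_skewCells]
  refine ⟨fun h => h.2.1, fun h => ?_⟩
  have := P.mem_Ioo_of_ht_pos (x := x) (by omega)
  rw [hZ.ht_eq (by omega) (by omega)]
  omega

end DyckPath.IsZigzag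

end zigzagBox

/-- The box set `t` consists of the boxes at level `k` in columns `a` to `b` over the zigzag
path of order `n`, where either `a = b` or both end columns are valley columns. -/
structure IsZigzagStrip (n k : ℕ) (a b : ℤ) (t : Finset (ℤ × ℤ)) : Prop where
  le : a ≤ b
  ends : a = b ∨ (a + n) % 2 = 0 ∧ (b + n) % 2 = 0
  eq_image : t = (Icc a b).image (zigzagBox n k)

namespace IsZigzagStrip

variable {n k l : ℕ} {a b x y : ℤ} {t : Finset (ℤ × ℤ)} (ht : IsZigzagStrip n k a b t)

include ht

lemma zigzagBox_mem : zigzagBox n l x ∈ t ↔ l = k ∧ a ≤ x ∧ x ≤ b := by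
  rw [ht.eq_image, zigzagBox_mem_image, mem_Icc]

lemma isDyckTile : IsDyckTile t := by
  have hends := ht.ends
  refine ⟨a, b, fun x => 2 * k + (x + n) % 2, ht.le, ?_, ?_, ?_, ht.eq_image⟩
  all_goals intros; dsimp only; omega

lemma zigzagBox_mem_of_adjacent (hx : zigzagBox n k x ∈ t) (hpeak : (x + n) % 2 = 1)
    (hne : t ≠ {zigzagBox n k x}) (hy : x - 1 ≤ y) (hy' : y ≤ x + 1) :
    zigzagBox n k y ∈ t := by
  rw [ht.zigzagBox_mem] at hx ⊢
  obtain rfl | hends := ht.ends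
  · obtain rfl : a = x := by omega
    exact absurd (by rw [ht.eq_image, Icc_self, image_singleton]) hne
  · omega

end IsZigzagStrip

/-- The columns of the peaks of the zigzag path of order `n`. -/
def peakCols (n : ℕ) : Finset ℤ := (Icc (-(n : ℤ)) n).filter fun x => (x + n) % 2 = 1

lemma mem_peakCols {n : ℕ} {x : ℤ} : x ∈ peakCols n ↔ -n ≤ x ∧ x ≤ n ∧ (x + n) % 2 = 1 := by
  rw [peakCols, mem_filter, mem_Icc, and_assoc]

lemma card_peakCols (n : ℕ) : (peakCols n).card = n := by
  have hpeaks : peakCols n = (range n).image fun k : ℕ => 2 * (k : ℤ) + 1 - n := by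
    ext x
    rw [mem_peakCols, mem_image]
    constructor
    · intro h
      exact ⟨((x + n) / 2).toNat, mem_range.2 (by omega), by omega⟩
    · rintro ⟨k, hk, rfl⟩
      have := mem_range.1 hk
      omega
  rw [hpeaks, card_image_of_injective _ fun a b h => by omega, card_range]

/-! ### Marked paths and their tilings -/

/-- A Dyck path with a number `mark x` attached to each peak column `x` of the zigzag path of
the same order, at most the number of boxes of that column between the two paths. This data is
shared by tilings and tableaux: the mark counts the boxes of the column in tiles with several
boxes, respectively below the dot. -/
@[ext]
structure MarkedPath (n : ℕ) where
  path : DyckPath n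
  mark : peakCols n → ℕ
  mark_le : ∀ x : peakCols n, 2 * (mark x : ℤ) + 1 ≤ path.ht x

namespace MarkedPath

variable {n k l : ℕ} {x y z : ℤ} (M : MarkedPath n)

/-- The boxes in columns `x` and `y` at level `k` are to lie in the same tile. -/
def Linked (k : ℕ) (x y : ℤ) : Prop :=
  x = y ∨ ∀ w : peakCols n, (w : ℤ) ∈ Set.uIcc x y → k < M.mark w

namespace Linked

variable {M}

lemma symm (h : M.Linked k x y) : M.Linked k y x :=
  h.imp Eq.symm fun h w hw => h w (Set.uIcc_comm x y ▸ hw)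

lemma trans (hxy : M.Linked k x y) (hyz : M.Linked k y z) : M.Linked k x z := by
  rcases hxy with rfl | hxy
  · exact hyz
  rcases hyz with rfl | hyz
  · exact Or.inr hxy
  · exact Or.inr fun w hw => (Set.uIcc_subset_uIcc_union_uIcc hw).elim (hxy w) (hyz w)

lemma anti (h : M.Linked k x y) (hl : l ≤ k) : M.Linked l x y :=
  h.imp_right fun h w hw => hl.trans_lt (h w hw)

lemma of_mem_uIcc (h : M.Linked k x y) (hz : z ∈ Set.uIcc x y) : M.Linked k x z := by
  rcases h with rfl | h
  · rw [Set.uIcc_self, Set.mem_singleton_iff] at hz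
    exact Or.inl hz.symm
  · exact Or.inr fun w hw => h w (Set.uIcc_subset_uIcc_left hz hw)

end Linked

lemma linked_of_lt_mark {w : peakCols n} (hw : k < M.mark w) (hy : w - 1 ≤ y) (hy' : y ≤ w + 1) :
    M.Linked k w y := by
  refine Or.inr fun v hv => ?_
  have hpv := mem_peakCols.1 v.2
  have hpw := mem_peakCols.1 w.2
  rw [Set.mem_uIcc] at hv
  obtain rfl : v = w := Subtype.ext (by omega)
  exact hw

lemma zigzagBox_mem_of_lt_mark {Z : DyckPath n} (hZ : Z.IsZigzag) {w : peakCols n}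
    (hw : k < M.mark w) (hy : w - 1 ≤ y) (hy' : y ≤ w + 1) :
    zigzagBox n k y ∈ skewCells Z M.path := by
  rw [hZ.zigzagBox_mem_skewCells]
  have hpeak := mem_peakCols.1 w.2
  have hmark := M.mark_le w
  have := M.path.ht_le_ht_add_one (x := w) hy hy'
  obtain hyw | hyw : y = w ∨ (y + n) % 2 = 0 := by omega
  · rw [hyw]
    omega
  · omega

lemma zigzagBox_mem_of_linked {Z : DyckPath n} (hZ : Z.IsZigzag)
    (hx : zigzagBox n k x ∈ skewCells Z M.path) (hxy : M.Linked k x y) (hy : y ∈ Icc (-n : ℤ) n) :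
    zigzagBox n k y ∈ skewCells Z M.path := by
  rcases eq_or_ne x y with rfl | hne
  · exact hx
  have hlt := hxy.resolve_left hne
  have := M.path.mem_Ioo_of_ht_pos (x := x) (by have := hZ.zigzagBox_mem_skewCells.1 hx; omega)
  rw [mem_Icc] at hy
  obtain ⟨w, hw, hwxy, hyw, hyw'⟩ :
      ∃ w ∈ peakCols n, w ∈ Set.uIcc x y ∧ w - 1 ≤ y ∧ y ≤ w + 1 := by
    simp only [mem_peakCols, Set.mem_uIcc]
    by_cases hpeak : (y + n) % 2 = 1
    · exact ⟨y, by omega⟩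
    rcases lt_or_gt_of_ne hne with h | h
    · exact ⟨y - 1, by omega⟩
    · exact ⟨y + 1, by omega⟩
  exact M.zigzagBox_mem_of_lt_mark hZ (hlt ⟨w, hw⟩ hwxy) hyw hyw'

open Classical in
/-- The tile at level `k` through column `x` in the tiling determined by the marks. -/
def tile (k : ℕ) (x : ℤ) : Finset (ℤ × ℤ) :=
  ((Icc (-n : ℤ) n).filter (M.Linked k x)).image (zigzagBox n k)

lemma mem_tile {p : ℤ × ℤ} :
    p ∈ M.tile k x ↔ ∃ y, (y ∈ Icc (-n : ℤ) n ∧ M.Linked k x y) ∧ zigzagBox n k y = p := by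
  simp only [tile, mem_image, mem_filter]

lemma zigzagBox_mem_tile :
    zigzagBox n l y ∈ M.tile k x ↔ l = k ∧ y ∈ Icc (-n : ℤ) n ∧ M.Linked k x y := by
  simp only [tile, zigzagBox_mem_image, mem_filter]

lemma self_mem_tile (hx : x ∈ Icc (-n : ℤ) n) : zigzagBox n k x ∈ M.tile k x :=
  M.zigzagBox_mem_tile.2 ⟨rfl, hx, Or.inl rfl⟩

lemma eq_tile_of_mem (h : zigzagBox n l y ∈ M.tile k x) : M.tile k x = M.tile l y := by
  obtain ⟨rfl, -, hxy⟩ := M.zigzagBox_mem_tile.1 h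
  ext p
  simp only [mem_tile]
  exact exists_congr fun z => and_congr_left fun _ => and_congr_right fun _ =>
    ⟨hxy.symm.trans, hxy.trans⟩

lemma tile_eq_of_mem_of_mem {p : ℤ × ℤ} (hx : p ∈ M.tile k x) (hy : p ∈ M.tile l y) :
    M.tile k x = M.tile l y := by
  obtain ⟨z, -, rfl⟩ := M.mem_tile.1 hx
  rw [M.eq_tile_of_mem hx, M.eq_tile_of_mem hy]

lemma exists_linked_iff_mem_Icc (k : ℕ) (hx : x ∈ Icc (-n : ℤ) n) :
    ∃ a b, a ≤ b ∧ ∀ y, y ∈ Icc (-n : ℤ) n ∧ M.Linked k x y ↔ a ≤ y ∧ y ≤ b := by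
  classical
  have hconn : ((Icc (-n : ℤ) n).filter (M.Linked k x) : Set ℤ).OrdConnected := by
    refine Set.ordConnected_of_uIcc_subset_left (x := x) fun y hy z hz => ?_
    rw [mem_coe, mem_filter] at hy ⊢
    refine ⟨?_, hy.2.of_mem_uIcc hz⟩
    simp only [Set.mem_uIcc, mem_Icc] at hz hy hx ⊢
    omega
  obtain ⟨a, b, hab, heq⟩ :=
    exists_eq_Icc_of_ordConnected ⟨x, mem_filter.2 ⟨hx, Or.inl rfl⟩⟩ hconn
  exact ⟨a, b, hab, fun y => by rw [← mem_filter, heq, mem_Icc]⟩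

lemma exists_isZigzagStrip_tile (k : ℕ) (hx : x ∈ Icc (-n : ℤ) n) :
    ∃ a b, IsZigzagStrip n k a b (M.tile k x) := by
  obtain ⟨a, b, hab, hmem⟩ := M.exists_linked_iff_mem_Icc k hx
  refine ⟨a, b, hab, or_iff_not_imp_left.2 fun hne => ?_, ?_⟩
  · have hlt := (((hmem a).2 ⟨le_rfl, hab⟩).2.symm.trans
      ((hmem b).2 ⟨hab, le_rfl⟩).2).resolve_left hne
    have hclosed {w y : ℤ} (haw : a ≤ w) (hwb : w ≤ b) (hpeak : (w + n) % 2 = 1)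
        (hy : w - 1 ≤ y) (hy' : y ≤ w + 1) : a ≤ y ∧ y ≤ b := by
      obtain ⟨hwn, hxw⟩ := (hmem w).2 ⟨haw, hwb⟩
      rw [mem_Icc] at hwn
      have hlink := M.linked_of_lt_mark (w := ⟨w, mem_peakCols.2 ⟨hwn.1, hwn.2, hpeak⟩⟩)
        (hlt _ (Set.mem_uIcc.2 (Or.inl ⟨haw, hwb⟩))) hy hy'
      exact (hmem y).1 ⟨mem_Icc.2 (by omega), hxw.trans hlink⟩
    have hleft := hclosed (w := a) (y := a - 1) le_rfl hab
    have hright := hclosed (w := b) (y := b + 1) hab le_rfl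
    omega
  · ext p
    simp only [mem_tile, mem_image, mem_Icc, ← hmem]

/-- The tiles of the tiling over the zigzag path `Z` determined by the marks. -/
def tiles (Z : DyckPath n) : Finset (Finset (ℤ × ℤ)) :=
  (skewCells Z M.path).image fun p => M.tile (p.2 / 2).toNat p.1

variable {M} {Z : DyckPath n}

lemma mem_tiles {t : Finset (ℤ × ℤ)} :
    t ∈ M.tiles Z ↔ ∃ k x, zigzagBox n k x ∈ skewCells Z M.path ∧ M.tile k x = t := by
  have hlevel (k : ℕ) (x : ℤ) : ((zigzagBox n k x).2 / 2).toNat = k := by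
    simp only [zigzagBox]
    omega
  rw [tiles, mem_image]
  constructor
  · rintro ⟨p, hp, rfl⟩
    obtain ⟨k, hk⟩ := exists_zigzagBox_eq hp
    rw [← hk, hlevel]
    exact ⟨k, p.1, hk ▸ hp, rfl⟩
  · rintro ⟨k, x, hx, rfl⟩
    exact ⟨zigzagBox n k x, hx, by rw [hlevel]; rfl⟩

section Tiling

variable (hZ : Z.IsZigzag)

include hZ

lemma mem_Icc_of_zigzagBox_mem (hx : zigzagBox n k x ∈ skewCells Z M.path) :
    x ∈ Icc (-n : ℤ) n := by
  rw [hZ.zigzagBox_mem_skewCells] at hx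
  have := M.path.mem_Ioo_of_ht_pos (x := x) (by omega)
  exact mem_Icc.2 (by omega)

lemma tile_subset_skewCells (hx : zigzagBox n k x ∈ skewCells Z M.path) :
    M.tile k x ⊆ skewCells Z M.path := by
  intro p hp
  obtain ⟨y, ⟨hy, hxy⟩, rfl⟩ := M.mem_tile.1 hp
  exact M.zigzagBox_mem_of_linked hZ hx hxy hy

variable (M)

/-- The Dyck tiling over the zigzag path determined by a marked path. -/
def toTiling : DyckTiling n where
  lower := Z
  upper := M.path
  below := hZ.ht_le_ht M.path
  tiles := M.tiles Z
  isDyck t ht := by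
    obtain ⟨k, x, hx, rfl⟩ := mem_tiles.1 ht
    obtain ⟨a, b, hstrip⟩ := M.exists_isZigzagStrip_tile k (mem_Icc_of_zigzagBox_mem hZ hx)
    exact hstrip.isDyckTile
  disj t ht u hu hne := by
    obtain ⟨k, x, -, rfl⟩ := mem_tiles.1 ht
    obtain ⟨l, y, -, rfl⟩ := mem_tiles.1 hu
    exact disjoint_left.2 fun p hp hp' => hne (M.tile_eq_of_mem_of_mem hp hp')
  cover := by
    ext p
    simp only [mem_biUnion, mem_tiles, id]
    constructor
    · rintro ⟨_, ⟨k, x, hx, rfl⟩, hp⟩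
      exact tile_subset_skewCells hZ hx hp
    · intro hp
      obtain ⟨k, hk⟩ := exists_zigzagBox_eq hp
      rw [← hk] at hp ⊢
      exact ⟨_, ⟨k, p.1, hp, rfl⟩, M.self_mem_tile (mem_Icc_of_zigzagBox_mem hZ hp)⟩

lemma toTiling_coverInclusive : (M.toTiling hZ).CoverInclusive := by
  rintro t ht u hu ⟨p, hp, q, hq, hcol, hlt⟩ r hr
  obtain ⟨k, x, -, rfl⟩ := mem_tiles.1 ht
  obtain ⟨l, y, -, rfl⟩ := mem_tiles.1 hu
  obtain ⟨z, ⟨-, hxz⟩, rfl⟩ := M.mem_tile.1 hp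
  obtain ⟨_, ⟨-, hyz⟩, rfl⟩ := M.mem_tile.1 hq
  obtain ⟨v, ⟨hv, hxv⟩, rfl⟩ := M.mem_tile.1 hr
  obtain rfl : z = _ := hcol
  have hlk : l ≤ k := by
    simp only [zigzagBox] at hlt
    omega
  exact ⟨_, M.zigzagBox_mem_tile.2 ⟨rfl, hv, hyz.trans ((hxz.symm.trans hxv).anti hlk)⟩⟩

end Tiling

end MarkedPath

/-! ### Cover-inclusive tilings over the zigzag path -/

namespace IsDyckTile

variable {t : Finset (ℤ × ℤ)} (ht : IsDyckTile t)

include ht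

lemma exists_mem_iff : ∃ (a b : ℤ) (f : ℤ → ℤ), a ≤ b ∧
    (∀ x : ℤ, a ≤ x → x < b → f (x + 1) = f x + 1 ∨ f (x + 1) = f x - 1) ∧
    f b = f a ∧ (∀ x : ℤ, a ≤ x → x ≤ b → f a ≤ f x) ∧
    ∀ x z : ℤ, (x, z) ∈ t ↔ (a ≤ x ∧ x ≤ b) ∧ f x = z := by
  obtain ⟨a, b, f, hab, hstep, hends, hlow, rfl⟩ := ht
  refine ⟨a, b, f, hab, hstep, hends, hlow, fun x z => ?_⟩
  simp only [mem_image, mem_Icc, Prod.mk.injEq]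
  constructor
  · rintro ⟨_, hx, rfl, rfl⟩
    exact ⟨hx, rfl⟩
  · rintro ⟨hx, rfl⟩
    exact ⟨x, hx, rfl, rfl⟩

lemma nonempty : t.Nonempty := by
  obtain ⟨a, b, f, hab, -, -, -, hmem⟩ := ht.exists_mem_iff
  exact ⟨(a, f a), (hmem _ _).2 ⟨⟨le_rfl, hab⟩, rfl⟩⟩

lemma height_unique {x z z' : ℤ} (hz : (x, z) ∈ t) (hz' : (x, z') ∈ t) : z = z' := by
  obtain ⟨a, b, f, -, -, -, -, hmem⟩ := ht.exists_mem_iff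
  exact ((hmem _ _).1 hz).2.symm.trans ((hmem _ _).1 hz').2

lemma height_step {x z z' : ℤ} (hz : (x, z) ∈ t) (hz' : (x + 1, z') ∈ t) :
    z' = z + 1 ∨ z' = z - 1 := by
  obtain ⟨a, b, f, -, hstep, -, -, hmem⟩ := ht.exists_mem_iff
  obtain ⟨⟨hax, -⟩, rfl⟩ := (hmem _ _).1 hz
  obtain ⟨⟨-, hxb⟩, rfl⟩ := (hmem _ _).1 hz'
  exact hstep x hax (by omega)

lemma level_eq_or_add_one_eq {n k l : ℕ} {v w : ℤ} (hvalley : (v + n) % 2 = 0)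
    (hvw : w = v + 1 ∨ w = v - 1) (hv : zigzagBox n k v ∈ t) (hw : zigzagBox n l w ∈ t) :
    l = k ∨ l + 1 = k := by
  rcases hvw with rfl | rfl
  · have := ht.height_step hv hw
    omega
  · have := ht.height_step hw (by rwa [sub_add_cancel])
    omega

end IsDyckTile

namespace DyckTiling

attribute [ext] DyckTiling

variable {n : ℕ} {T : DyckTiling n} {t u : Finset (ℤ × ℤ)}

lemma mem_skewCells_of_mem (ht : t ∈ T.tiles) {p : ℤ × ℤ} (hp : p ∈ t) :
    p ∈ skewCells T.lower T.upper :=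
  T.cover ▸ mem_biUnion.2 ⟨t, ht, hp⟩

lemma exists_tile {p : ℤ × ℤ} (hp : p ∈ skewCells T.lower T.upper) : ∃ t ∈ T.tiles, p ∈ t := by
  rwa [← T.cover, mem_biUnion] at hp

lemma tile_unique (ht : t ∈ T.tiles) (hu : u ∈ T.tiles) {p : ℤ × ℤ} (hp : p ∈ t)
    (hp' : p ∈ u) : t = u := by
  by_contra hne
  exact disjoint_left.1 (T.disj t ht u hu hne) hp hp'

lemma eq_of_tiles_subset {S : DyckTiling n} (hlower : S.lower = T.lower)
    (hupper : S.upper = T.upper) (htiles : S.tiles ⊆ T.tiles) : S = T := by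
  refine DyckTiling.ext hlower hupper (htiles.antisymm fun t ht => ?_)
  obtain ⟨p, hp⟩ := (T.isDyck t ht).nonempty
  have hcell := mem_skewCells_of_mem ht hp
  rw [← hlower, ← hupper] at hcell
  obtain ⟨s, hs, hps⟩ := exists_tile hcell
  rwa [tile_unique ht (htiles hs) hp hps]

section Zigzag

variable (hZ : T.lower.IsZigzag) (hT : T.CoverInclusive)

include hZ hT

/- If the tile of a valley box descended to a neighbouring peak box, then the tile just below
that valley box, which has to cover the same columns, would by induction contain the same peak
box. -/
lemma level_eq_of_adjacent {k l : ℕ} {v w : ℤ} (ht : t ∈ T.tiles) (hvalley : (v + n) % 2 = 0)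
    (hvw : w = v + 1 ∨ w = v - 1) (hv : zigzagBox n k v ∈ t) (hw : zigzagBox n l w ∈ t) :
    l = k := by
  have hlk := (T.isDyck t ht).level_eq_or_add_one_eq hvalley hvw hv hw
  induction k generalizing t l with
  | zero => omega
  | succ k ih =>
    refine hlk.resolve_right fun hlk => ?_
    obtain rfl : l = k := by omega
    have hbelow : zigzagBox n l v ∈ skewCells T.lower T.upper := by
      have := hZ.zigzagBox_mem_skewCells.1 (mem_skewCells_of_mem ht hv)
      rw [hZ.zigzagBox_mem_skewCells]
      omega
    obtain ⟨u, hu, hvu⟩ := exists_tile hbelow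
    obtain ⟨z, hwu⟩ := hT t ht u hu ⟨_, hv, _, hvu, rfl, by simp [zigzagBox]⟩ _ hw
    obtain ⟨j, hj⟩ := exists_zigzagBox_eq (mem_skewCells_of_mem hu hwu)
    rw [← hj] at hwu
    obtain rfl : j = l := ih hu hvu hwu
      ((T.isDyck u hu).level_eq_or_add_one_eq hvalley hvw hvu hwu)
    rw [← tile_unique ht hu hw hwu] at hvu
    have := (T.isDyck t ht).height_unique hv hvu
    omega

lemma exists_isZigzagStrip (ht : t ∈ T.tiles) : ∃ k a b, IsZigzagStrip n k a b t := by
  obtain ⟨a, b, f, hab, -, hends, hlow, hmem⟩ := (T.isDyck t ht).exists_mem_iff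
  have hbox (x : ℤ) (hx : a ≤ x) (hxb : x ≤ b) : (x, f x) ∈ t := (hmem _ _).2 ⟨⟨hx, hxb⟩, rfl⟩
  obtain ⟨k, hk⟩ := exists_zigzagBox_eq (mem_skewCells_of_mem ht (hbox a le_rfl hab))
  have hlevel (x : ℤ) (hx : a ≤ x) (hxb : x ≤ b) : zigzagBox n k x = (x, f x) := by
    induction x, hx using Int.leInduction with
    | base => exact hk
    | succ x hx ih =>
      have hxt := ih (by omega) ▸ hbox x hx (by omega)
      have hnext := hbox (x + 1) (by omega) hxb
      obtain ⟨l, hl⟩ := exists_zigzagBox_eq (mem_skewCells_of_mem ht hnext)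
      rw [← hl] at hnext ⊢
      obtain hvalley | hvalley : (x + n) % 2 = 0 ∨ (x + 1 + n) % 2 = 0 := by omega
      · rw [level_eq_of_adjacent hZ hT ht hvalley (Or.inl rfl) hxt hnext]
      · rw [level_eq_of_adjacent hZ hT ht hvalley (Or.inr (by omega)) hnext hxt]
  have hf (x : ℤ) (hx : a ≤ x) (hxb : x ≤ b) : f x = 2 * k + (x + n) % 2 :=
    (congrArg Prod.snd (hlevel x hx hxb)).symm
  refine ⟨k, a, b, hab, or_iff_not_imp_left.2 fun hne => ?_, ?_⟩
  · have := hf a le_rfl hab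
    have := hf b hab le_rfl
    have := hf (a + 1) (by omega) (by omega)
    have := hlow (a + 1) (by omega) (by omega)
    omega
  · ext ⟨x, z⟩
    simp only [hmem, mem_image, mem_Icc, zigzagBox, Prod.mk.injEq]
    constructor
    · rintro ⟨hx, rfl⟩
      exact ⟨x, hx, rfl, (hf x hx.1 hx.2).symm⟩
    · rintro ⟨_, hx, rfl, rfl⟩
      exact ⟨hx, hf _ hx.1 hx.2⟩

lemma singleton_mem_of_le {k l : ℕ} {w : ℤ} (hk : {zigzagBox n k w} ∈ T.tiles) (hkl : k ≤ l)
    (hl : zigzagBox n l w ∈ skewCells T.lower T.upper) : {zigzagBox n l w} ∈ T.tiles := by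
  rcases hkl.eq_or_lt with rfl | hlt
  · exact hk
  obtain ⟨t, ht, hwt⟩ := exists_tile hl
  obtain ⟨j, a, b, hstrip⟩ := exists_isZigzagStrip hZ hT ht
  obtain ⟨rfl, -⟩ := hstrip.zigzagBox_mem.1 hwt
  have hcolumn {x : ℤ} (hx : a ≤ x ∧ x ≤ b) : x = w := by
    have hab : zigzagBox n l x ∈ t := hstrip.zigzagBox_mem.2 ⟨rfl, hx⟩
    obtain ⟨z, hz⟩ := hT t ht _ hk ⟨_, hwt, _, mem_singleton_self _, rfl,
      by simpa [zigzagBox] using hlt⟩ _ hab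
    exact congrArg Prod.fst (mem_singleton.1 hz)
  obtain rfl := hcolumn ⟨le_rfl, hstrip.le⟩
  obtain rfl := hcolumn ⟨hstrip.le, le_rfl⟩
  rwa [hstrip.eq_image, Icc_self, image_singleton] at ht

lemma exists_mark (w : peakCols n) : ∃ m : ℕ, 2 * (m : ℤ) + 1 ≤ T.upper.ht w ∧
    ∀ k : ℕ, 2 * (k : ℤ) + 3 ≤ T.upper.ht w → ({zigzagBox n k w} ∈ T.tiles ↔ m ≤ k) := by
  classical
  obtain ⟨hw, hw', hpeak⟩ := mem_peakCols.1 w.2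
  have hparity := T.upper.ht_parity hw hw'
  have hnonneg := T.upper.ht_nonneg w
  have hex : ∃ k : ℕ, T.upper.ht w < 2 * (k : ℤ) + 3 ∨ {zigzagBox n k w} ∈ T.tiles :=
    ⟨(T.upper.ht w).toNat, Or.inl (by omega)⟩
  refine ⟨Nat.find hex, ?_, fun k hk => ⟨fun h => Nat.find_min' hex (Or.inr h), fun h => ?_⟩⟩
  · rcases Nat.eq_zero_or_pos (Nat.find hex) with hzero | hpos
    · rw [hzero]
      omega
    · have := not_or.1 (Nat.find_min hex (Nat.sub_one_lt hpos.ne'))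
      omega
  · refine singleton_mem_of_le hZ hT ((Nat.find_spec hex).resolve_left (by omega)) h ?_
    rw [hZ.zigzagBox_mem_skewCells]
    omega

end Zigzag

end DyckTiling

namespace MarkedPath

variable {n k : ℕ} {x y : ℤ} {M N : MarkedPath n}

/-- In the peak columns of the tiling, the one-box tiles are those at a level at least the mark
of the column; this makes `M` the marked path encoding `T`. -/
structure Encodes (M : MarkedPath n) (T : DyckTiling n) : Prop where
  path_eq : M.path = T.upper
  singleton_mem_iff : ∀ (w : peakCols n) (k : ℕ), 2 * (k : ℤ) + 3 ≤ M.path.ht w →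
    ({zigzagBox n k w} ∈ T.tiles ↔ M.mark w ≤ k)

lemma exists_encodes {T : DyckTiling n} (hZ : T.lower.IsZigzag) (hT : T.CoverInclusive) :
    ∃ M : MarkedPath n, M.Encodes T := by
  choose m hm_le hm using DyckTiling.exists_mark hZ hT
  exact ⟨⟨T.upper, m, hm_le⟩, rfl, hm⟩

lemma toTiling_encodes (M : MarkedPath n) {Z : DyckPath n} (hZ : Z.IsZigzag) :
    M.Encodes (M.toTiling hZ) where
  path_eq := rfl
  singleton_mem_iff w k hk := by
    obtain ⟨hw, hw', hpeak⟩ := mem_peakCols.1 w.2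
    have hself := M.self_mem_tile (k := k) (mem_Icc.2 ⟨hw, hw'⟩)
    constructor
    · intro hmem
      obtain ⟨l, y, -, hy⟩ := mem_tiles.1 hmem
      have htile : M.tile k w = {zigzagBox n k w} := by
        rw [← hy, M.tile_eq_of_mem_of_mem hself (hy ▸ mem_singleton_self _)]
      by_contra! hlt
      have hnext : zigzagBox n k (w + 1) ∈ M.tile k w :=
        M.zigzagBox_mem_tile.2 ⟨rfl, mem_Icc.2 (by omega),
          M.linked_of_lt_mark hlt (by omega) le_rfl⟩
      rw [htile, mem_singleton, zigzagBox_inj] at hnext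
      omega
    · intro hle
      refine mem_tiles.2 ⟨k, w, hZ.zigzagBox_mem_skewCells.2 (by omega), ?_⟩
      refine eq_singleton_iff_unique_mem.2 ⟨hself, fun p hp => ?_⟩
      obtain ⟨y, ⟨-, rfl | hlink⟩, rfl⟩ := M.mem_tile.1 hp
      · rfl
      · exact absurd (hlink w Set.left_mem_uIcc) hle.not_gt

namespace Encodes

variable {T : DyckTiling n}

lemma mark_le_mark (hM : M.Encodes T) (hN : N.Encodes T) (w : peakCols n) :
    M.mark w ≤ N.mark w := by
  by_contra! hlt
  have hM_le := M.mark_le w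
  have hN_single := (hN.singleton_mem_iff w (N.mark w)
    (by rw [hN.path_eq, ← hM.path_eq]; omega)).2 le_rfl
  exact hlt.not_ge ((hM.singleton_mem_iff w (N.mark w) (by omega)).1 hN_single)

lemma unique (hM : M.Encodes T) (hN : N.Encodes T) : M = N :=
  MarkedPath.ext (hM.path_eq.trans hN.path_eq.symm)
    (funext fun w => (hM.mark_le_mark hN w).antisymm (hN.mark_le_mark hM w))

variable (hM : M.Encodes T) (hZ : T.lower.IsZigzag) (hT : T.CoverInclusive)
  {t : Finset (ℤ × ℤ)} (ht : t ∈ T.tiles)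

include hM hZ hT ht

lemma zigzagBox_mem_of_lt_mark {w : peakCols n} (hw : k < M.mark w)
    (hx : w - 1 ≤ x ∧ x ≤ w + 1) (hy : w - 1 ≤ y ∧ y ≤ w + 1) (hxt : zigzagBox n k x ∈ t) :
    zigzagBox n k y ∈ t := by
  have hw_le := M.mark_le w
  have hcell := M.zigzagBox_mem_of_lt_mark hZ (y := w) hw (by omega) (by omega)
  rw [hM.path_eq] at hcell
  obtain ⟨s, hs, hws⟩ := DyckTiling.exists_tile hcell
  have hne : s ≠ {zigzagBox n k w} := by
    rintro rfl
    exact hw.not_ge ((hM.singleton_mem_iff w k (by omega)).1 hs)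
  obtain ⟨l, a, b, hstrip⟩ := DyckTiling.exists_isZigzagStrip hZ hT hs
  obtain ⟨rfl, -⟩ := hstrip.zigzagBox_mem.1 hws
  have hnear {z : ℤ} (hz : w - 1 ≤ z ∧ z ≤ w + 1) : zigzagBox n k z ∈ s :=
    hstrip.zigzagBox_mem_of_adjacent hws (mem_peakCols.1 w.2).2.2 hne hz.1 hz.2
  rw [DyckTiling.tile_unique ht hs hxt (hnear hx)]
  exact hnear hy

lemma linked_of_mem (hx : zigzagBox n k x ∈ t) (hy : zigzagBox n k y ∈ t) : M.Linked k x y := by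
  obtain ⟨l, a, b, hstrip⟩ := DyckTiling.exists_isZigzagStrip hZ hT ht
  obtain ⟨rfl, hxab⟩ := hstrip.zigzagBox_mem.1 hx
  have hyab := (hstrip.zigzagBox_mem.1 hy).2
  refine or_iff_not_imp_left.2 fun hne w hw => ?_
  have hwt : zigzagBox n k w ∈ t := by
    rw [Set.mem_uIcc] at hw
    exact hstrip.zigzagBox_mem.2 ⟨rfl, by omega⟩
  have hcell := hZ.zigzagBox_mem_skewCells.1 (DyckTiling.mem_skewCells_of_mem ht hwt)
  have hpeak := (mem_peakCols.1 w.2).2.2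
  by_contra! hle
  have hsingle := (hM.singleton_mem_iff w k (by rw [hM.path_eq]; omega)).2 hle
  obtain rfl := DyckTiling.tile_unique ht hsingle hwt (mem_singleton_self _)
  rw [mem_singleton, zigzagBox_inj] at hx hy
  exact hne (hx.2.trans hy.2.symm)

omit hT in
lemma mem_Icc_of_mem (hx : zigzagBox n k x ∈ t) : x ∈ Icc (-n : ℤ) n :=
  mem_Icc_of_zigzagBox_mem hZ (hM.path_eq ▸ DyckTiling.mem_skewCells_of_mem ht hx)

lemma zigzagBox_mem_of_linked_of_adjacent (hx : zigzagBox n k x ∈ t) (hxy : M.Linked k x y)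
    (hadj : y = x - 1 ∨ y = x + 1) (hy : y ∈ Icc (-n : ℤ) n) : zigzagBox n k y ∈ t := by
  have hlt := hxy.resolve_left (by omega)
  have hxn := hM.mem_Icc_of_mem hZ ht hx
  rw [mem_Icc] at hxn hy
  obtain ⟨w, hw, hwxy, hwx, hwy⟩ : ∃ w ∈ peakCols n, w ∈ Set.uIcc x y ∧
      (w - 1 ≤ x ∧ x ≤ w + 1) ∧ (w - 1 ≤ y ∧ y ≤ w + 1) := by
    simp only [mem_peakCols, Set.mem_uIcc]
    by_cases hpeak : (x + n) % 2 = 1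
    · exact ⟨x, by omega⟩
    · exact ⟨y, by omega⟩
  exact hM.zigzagBox_mem_of_lt_mark hZ hT ht (w := ⟨w, hw⟩) (hlt ⟨w, hw⟩ hwxy) hwx hwy hx

lemma zigzagBox_mem_of_linked (hx : zigzagBox n k x ∈ t) (hxy : M.Linked k x y)
    (hy : y ∈ Icc (-n : ℤ) n) : zigzagBox n k y ∈ t := by
  obtain ⟨l, a, b, hstrip⟩ := DyckTiling.exists_isZigzagStrip hZ hT ht
  obtain ⟨rfl, hxab⟩ := hstrip.zigzagBox_mem.1 hx
  have hxn := hM.mem_Icc_of_mem hZ ht hx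
  rw [mem_Icc] at hxn hy
  have hadvance {c d : ℤ} (hc : zigzagBox n k c ∈ t) (hcxy : c ∈ Set.uIcc x y)
      (hdxy : d ∈ Set.uIcc x y) (hcd : d = c - 1 ∨ d = c + 1) : zigzagBox n k d ∈ t := by
    refine hM.zigzagBox_mem_of_linked_of_adjacent hZ hT ht hc
      ((hxy.of_mem_uIcc hcxy).symm.trans (hxy.of_mem_uIcc hdxy)) hcd ?_
    rw [Set.mem_uIcc] at hdxy
    exact mem_Icc.2 (by omega)
  simp only [hstrip.zigzagBox_mem, Set.mem_uIcc, true_and] at hadvance ⊢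
  have hleft := hadvance (c := a) (d := a - 1)
  have hright := hadvance (c := b) (d := b + 1)
  omega

lemma tile_eq (hx : zigzagBox n k x ∈ t) : M.tile k x = t := by
  obtain ⟨l, a, b, hstrip⟩ := DyckTiling.exists_isZigzagStrip hZ hT ht
  obtain ⟨rfl, -⟩ := hstrip.zigzagBox_mem.1 hx
  ext p
  constructor
  · intro hp
    obtain ⟨y, ⟨hy, hxy⟩, rfl⟩ := M.mem_tile.1 hp
    exact hM.zigzagBox_mem_of_linked hZ hT ht hx hxy hy
  · intro hp
    obtain ⟨y, -, rfl⟩ := mem_image.1 (hstrip.eq_image ▸ hp)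
    exact M.zigzagBox_mem_tile.2
      ⟨rfl, hM.mem_Icc_of_mem hZ ht hp, hM.linked_of_mem hZ hT ht hx hp⟩

omit ht in
lemma toTiling_eq : M.toTiling hZ = T := by
  symm
  refine DyckTiling.eq_of_tiles_subset rfl hM.path_eq.symm fun t ht => ?_
  obtain ⟨k, a, b, hstrip⟩ := DyckTiling.exists_isZigzagStrip hZ hT ht
  have ha := hstrip.zigzagBox_mem.2 ⟨rfl, le_rfl, hstrip.le⟩
  exact mem_tiles.2 ⟨k, a, hM.path_eq ▸ DyckTiling.mem_skewCells_of_mem ht ha,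
    hM.tile_eq hZ hT ht ha⟩

end Encodes

end MarkedPath

/-! ### Marked paths and Dyck tableaux -/

lemma DyckPath.IsZigzag.mem_peakCols_iff_valley {n : ℕ} {Z : DyckPath (n + 1)}
    (hZ : Z.IsZigzag) {x : ℤ} :
    x ∈ peakCols n ↔ Z.ht (x - 1) = Z.ht x + 1 ∧ Z.ht (x + 1) = Z.ht x + 1 := by
  rw [mem_peakCols]
  have hnonneg := Z.ht_nonneg x
  constructor
  · intro h
    rw [hZ.ht_eq, hZ.ht_eq, hZ.ht_eq] <;> push_cast <;> omega
  · rintro ⟨hleft, hright⟩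
    have := Z.mem_Ioo_of_ht_pos (x := x - 1) (by omega)
    have := Z.mem_Ioo_of_ht_pos (x := x + 1) (by omega)
    rw [hZ.ht_eq, hZ.ht_eq] at hright <;> push_cast at * <;> omega

attribute [ext] DyckTableau

lemma DyckTableau.exists_dot {n : ℕ} {Z : DyckPath (n + 1)} (hZ : Z.IsZigzag)
    (D : DyckTableau n Z) (x : peakCols n) :
    ∃ k : ℕ, zigzagBox (n + 1) k x ∈ D.dots ∧ 2 * (k : ℤ) + 2 ≤ D.upper.ht x := by
  obtain ⟨hleft, hright⟩ := hZ.mem_peakCols_iff_valley.1 x.2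
  obtain ⟨p, hp⟩ := card_eq_one.1 (D.valley x hleft hright)
  obtain ⟨hdot, hcol⟩ := mem_filter.1 (hp ▸ mem_singleton_self p)
  obtain ⟨k, hk⟩ := exists_zigzagBox_eq (D.sub hdot)
  rw [← hk, hcol] at hdot
  have := hZ.zigzagBox_mem_skewCells.1 (D.sub hdot)
  exact ⟨k, hdot, by omega⟩

namespace MarkedPath

variable {n : ℕ} (M : MarkedPath n)

/-- The boxes holding the dots of the tableau of `M`: each dot sits at the level given by the
mark of its column. The valley columns of the zigzag path of order `n + 1` are the peak columns
for order `n`. -/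
def dots : Finset (ℤ × ℤ) := univ.image fun x : peakCols n => zigzagBox (n + 1) (M.mark x) x

variable {M}

lemma zigzagBox_mem_dots {k : ℕ} {x : peakCols n} :
    zigzagBox (n + 1) k x ∈ M.dots ↔ k = M.mark x := by
  simp only [dots, mem_image, mem_univ, true_and, zigzagBox_inj]
  constructor
  · rintro ⟨y, rfl, hyx⟩
    rw [Subtype.ext hyx]
  · rintro rfl
    exact ⟨x, rfl, rfl⟩

variable (M)

lemma card_dots : M.dots.card = n := by
  rw [dots, card_image_of_injective _ fun x y h => Subtype.ext (zigzagBox_inj.1 h).2,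
    card_univ, Fintype.card_coe, card_peakCols]

lemma card_filter_dots (x : peakCols n) : (M.dots.filter fun c => c.1 = (x : ℤ)).card = 1 := by
  refine card_eq_one.2 ⟨zigzagBox (n + 1) (M.mark x) x, ?_⟩
  rw [eq_singleton_iff_unique_mem, mem_filter]
  refine ⟨⟨zigzagBox_mem_dots.2 rfl, rfl⟩, fun p hp => ?_⟩
  obtain ⟨hp, hcol⟩ := mem_filter.1 hp
  obtain ⟨y, -, rfl⟩ := mem_image.1 hp
  rw [Subtype.ext (a1 := y) (a2 := x) hcol]

section Tableau

variable {Z : DyckPath (n + 1)} (hZ : Z.IsZigzag)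

include hZ

lemma dots_subset_skewCells : M.dots ⊆ skewCells Z M.path.raise := by
  intro p hp
  obtain ⟨x, -, rfl⟩ := mem_image.1 hp
  have hx := mem_peakCols.1 x.2
  have := M.mark_le x
  rw [hZ.zigzagBox_mem_skewCells, DyckPath.ht_raise, if_pos ⟨hx.1, hx.2.1⟩]
  push_cast
  omega

/-- The Dyck tableau over the zigzag path of order `n + 1` determined by a marked path. -/
def toTableau : DyckTableau n Z where
  upper := M.path.raise
  below := hZ.ht_le_ht M.path.raise
  dots := M.dots
  sub := M.dots_subset_skewCells hZ
  card_dots := M.card_dots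
  valley x hleft hright := M.card_filter_dots ⟨x, hZ.mem_peakCols_iff_valley.2 ⟨hleft, hright⟩⟩

lemma toTableau_injective :
    Function.Injective (toTableau (hZ := hZ) : MarkedPath n → DyckTableau n Z) := by
  intro M N h
  have hdots : M.dots = N.dots := congrArg DyckTableau.dots h
  refine MarkedPath.ext (DyckPath.raise_injective (congrArg DyckTableau.upper h))
    (funext fun x => zigzagBox_mem_dots.1 ?_)
  rw [← hdots]
  exact zigzagBox_mem_dots.2 rfl

lemma toTableau_surjective :
    Function.Surjective (toTableau (hZ := hZ) : MarkedPath n → DyckTableau n Z) := by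
  intro D
  choose m hdot hm_le using D.exists_dot hZ
  have hpos (x : ℤ) (hx : -n ≤ x) (hx' : x ≤ n) : 0 < D.upper.ht x := by
    by_cases hpeak : (x + n) % 2 = 1
    · exact lt_of_lt_of_le (by positivity) (hm_le ⟨x, mem_peakCols.2 ⟨hx, hx', hpeak⟩⟩)
    · have := D.upper.ht_nonneg x
      have := D.upper.ht_parity (x := x) (by omega) (by omega)
      omega
  obtain ⟨P, hP⟩ := D.upper.exists_raise_eq hpos
  let M : MarkedPath n := ⟨P, m, fun x => by
    have hx := mem_peakCols.1 x.2
    have := hm_le x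
    rw [← hP, DyckPath.ht_raise, if_pos ⟨hx.1, hx.2.1⟩] at this
    omega⟩
  have hdots : M.dots ⊆ D.dots := fun p hp => by
    obtain ⟨x, -, rfl⟩ := mem_image.1 hp
    exact hdot x
  exact ⟨M, DyckTableau.ext hP
    (eq_of_subset_of_card_le hdots (D.card_dots.trans M.card_dots.symm).le)⟩

lemma toTableau_bijective :
    Function.Bijective (toTableau (hZ := hZ) : MarkedPath n → DyckTableau n Z) :=
  ⟨toTableau_injective hZ, toTableau_surjective hZ⟩

end Tableau

end MarkedPath

/-- There is a bijection between the cover-inclusive Dyck tilings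
with lower path the zigzag path `(UD)^n` and the Dyck tableaux of order `n`. -/
theorem tilings_equiv_dyck_tableaux (n : ℕ) (Zn : DyckPath n) (Zn1 : DyckPath (n + 1))
    (hZn : ∀ i : Fin (2 * n), Zn.step i = decide ((i : ℕ) % 2 = 0))
    (hZn1 : ∀ i : Fin (2 * (n + 1)), Zn1.step i = decide ((i : ℕ) % 2 = 0)) :
    Nonempty ({T : DyckTiling n // T.CoverInclusive ∧ T.lower = Zn} ≃ DyckTableau n Zn1) := by
  let tiling (M : MarkedPath n) : {T : DyckTiling n // T.CoverInclusive ∧ T.lower = Zn} :=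
    ⟨M.toTiling hZn, M.toTiling_coverInclusive hZn, rfl⟩
  have hinj : Function.Injective tiling := fun M N h => by
    have hN := N.toTiling_encodes hZn
    rw [← show M.toTiling hZn = N.toTiling hZn from congrArg Subtype.val h] at hN
    exact (M.toTiling_encodes hZn).unique hN
  have hsurj : Function.Surjective tiling := by
    rintro ⟨T, hT, rfl⟩
    obtain ⟨M, hM⟩ := MarkedPath.exists_encodes hZn hT
    exact ⟨M, Subtype.ext (hM.toTiling_eq hZn hT)⟩
  exact ⟨(Equiv.ofBijective tiling ⟨hinj, hsurj⟩).symm.trans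
    (Equiv.ofBijective _ (MarkedPath.toTableau_bijective hZn1))⟩

end
end
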